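/- arXiv:2211.11241 — 3 statements merged into one kernel-verified Lean document; each statement's English description precedes it below -/
import Mathlib

section
/- Let t ∈ (0,1). Then C_t has an exact overlap if and only if t is rational and, writing t = p/q in lowest terms with p, q positive integers, one has p ∉ Γ and q ∉ Γ. -/
open Filter Topology

/-- The digit set `Ω_t = {0, 3t, 3, 3t+3}`. -/
def Omega (t : ℝ) : Set ℝ := {0, 3*t, 3, 3*t+3}

/-- The projection `C_t` of the four corner Cantor set:
the set of sums `∑_{i≥1} d_i 4^{-i}` with all digits `d_i ∈ Ω_t`. -/
noncomputable def cornerC (t : ℝ) : Set ℝ :=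
  {x | ∃ d : ℕ → ℝ, (∀ i, d i ∈ Omega t) ∧ x = ∑' i : ℕ, d i / 4^(i+1)}

/-- `C_t` has an exact overlap: two distinct finite digit sequences of the same
length `k ≥ 1` with equal weighted sums. -/
def HasExactOverlap (t : ℝ) : Prop :=
  ∃ k : ℕ, 0 < k ∧ ∃ c d : Fin k → ℝ,
    (∀ n, c n ∈ Omega t) ∧ (∀ n, d n ∈ Omega t) ∧ c ≠ d ∧
    ∑ n : Fin k, c n / 4^((n : ℕ)+1) = ∑ n : Fin k, d n / 4^((n : ℕ)+1)

/-- `Γ = {(2k-1)·2^{2ℓ-1} : k, ℓ ∈ ℕ_{>0}}`. -/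
def Gamma : Set ℕ := {m | ∃ k l : ℕ, 0 < k ∧ 0 < l ∧ m = (2*k-1) * 2^(2*l-1)}

/-!
After clearing denominators, an exact overlap is an equation `A = t * B` between two integers
`A`, `B` that are sums `∑ ± 4 ^ n` over finite sets of exponents. Such a sum, if nonzero, has even
`2`-adic valuation, and a positive integer belongs to `Γ` exactly when its valuation is odd;
reducing `A / B` to lowest terms gives one direction.

Conversely, let `t = p / q` with `p` and `q` of even valuation, and suppose that the `4 ^ k` strings
of length `k` over the digits `{0, p, q, p + q}` all have different values in base `4`. These values
lie in an interval of length `O(4 ^ k)`. The Fourier coefficient of their indicator function at the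
frequency `4 ^ i / 4 ^ k` is, in modulus, `4 ^ k` times
`∏_{m = 1}^{k - i} |cos (π p / 4 ^ m)| |cos (π q / 4 ^ m)|`. No factor vanishes, because the
valuations of `p` and `q` are even, so all these products are at least a constant `c > 0`. The `k`
frequencies being orthogonal, Bessel's inequality bounds `k * c ^ 2` independently of `k`, which is
absurd for large `k`.
-/

open scoped FourierTransform Pointwise ComplexConjugate

section DigitValue

variable {R : Type*} [CommSemiring R] {k : ℕ}

/-- The value `∑ c_n b ^ (k - 1 - n)` of a string of `k` digits in base `b`, as a linear function of
the string. The most significant digit comes first, so that dividing by `b ^ k` gives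
`∑ c_n b ^ (-(n + 1))`. -/
def digitValue (b : R) : (Fin k → R) →ₗ[R] R :=
  Fintype.linearCombination R fun n ↦ b ^ (n.rev : ℕ)

lemma digitValue_apply (b : R) (c : Fin k → R) :
    digitValue b c = ∑ n, c n * b ^ (n.rev : ℕ) :=
  Fintype.linearCombination_apply R _ c

lemma digitValue_succ (b : R) (c : Fin (k + 1) → R) :
    digitValue b c = b * digitValue b (Fin.init c) + c (Fin.last k) := by
  simp only [digitValue_apply, Fin.sum_univ_castSucc, Fin.rev_castSucc, Fin.val_succ, Fin.rev_last,
    Fin.val_zero, pow_zero, mul_one, Finset.mul_sum, Fin.init, pow_succ]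
  congr 1
  exact Finset.sum_congr rfl fun n _ ↦ by ring

lemma map_digitValue {S : Type*} [CommSemiring S] (f : R →+* S) (b : R) (c : Fin k → R) :
    f (digitValue b c) = digitValue (f b) (fun n ↦ f (c n)) := by
  simp only [digitValue_apply, map_sum, map_mul, map_pow]

lemma pow_rev_mul_pow_succ (b : R) (n : Fin k) : b ^ (n.rev : ℕ) * b ^ ((n : ℕ) + 1) = b ^ k := by
  rw [← pow_add, Fin.val_rev, Nat.sub_add_cancel n.isLt]

lemma sum_div_pow_eq_digitValue_div {F : Type*} [Field F] {b : F} (hb : b ≠ 0) (c : Fin k → F) :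
    ∑ n, c n / b ^ ((n : ℕ) + 1) = digitValue b c / b ^ k := by
  rw [digitValue_apply, Finset.sum_div]
  refine Finset.sum_congr rfl fun n _ ↦ ?_
  rw [← pow_rev_mul_pow_succ b n]
  field_simp

lemma digitValue_lt {b K : ℕ} (hb : 2 ≤ b) (hK : 0 < K) {c : Fin k → ℕ} (hc : ∀ n, c n ≤ K) :
    digitValue b c < K * b ^ k :=
  calc digitValue b c ≤ ∑ n : Fin k, K * b ^ (n.rev : ℕ) := by
        rw [digitValue_apply]
        gcongr with n
        exact hc n
    _ = K * ∑ n ∈ Finset.range k, b ^ n := by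
        rw [← Finset.mul_sum, ← Fin.sum_univ_eq_sum_range (fun n ↦ b ^ n),
          ← Equiv.sum_comp Fin.revPerm]
        simp only [Fin.revPerm_apply, Fin.rev_rev]
    _ < K * b ^ k :=
        Nat.mul_lt_mul_of_pos_left (Nat.geomSum_lt hb fun n hn ↦ Finset.mem_range.1 hn) hK

lemma eq_zero_of_digitValue_eq_zero {b : ℤ} {α : Fin k → ℤ} (hα : ∀ n, |α n| < b)
    (h : digitValue b α = 0) : α = 0 := by
  induction k with
  | zero => exact Subsingleton.elim _ _
  | succ k ih =>
    rw [digitValue_succ] at h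
    have last_eq_zero : α (Fin.last k) = 0 :=
      Int.eq_zero_of_abs_lt_dvd ((dvd_add_right (dvd_mul_right _ _)).1 (h ▸ dvd_zero b)) (hα _)
    have hb : b ≠ 0 := ((abs_nonneg _).trans_lt (hα (Fin.last k))).ne'
    have init_eq_zero : Fin.init α = 0 := by
      refine ih (fun n ↦ hα _) ?_
      simpa [last_eq_zero, hb] using h
    funext n
    exact Fin.lastCases last_eq_zero (fun i ↦ congrFun init_eq_zero i) n

/-- The valuation is twice the number of trailing zero digits. -/
lemma even_padicValInt_digitValue_sq {ℓ : ℕ} [Fact ℓ.Prime] {α : Fin k → ℤ}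
    (hα : ∀ n, |α n| < ℓ) : Even (padicValInt ℓ (digitValue ((ℓ : ℤ) ^ 2) α)) := by
  induction k with
  | zero => simp [digitValue_apply]
  | succ k ih =>
    rw [digitValue_succ]
    obtain last_eq_zero | last_ne_zero := eq_or_ne (α (Fin.last k)) 0
    · obtain init_eq_zero | init_ne_zero := eq_or_ne (digitValue ((ℓ : ℤ) ^ 2) (Fin.init α)) 0
      · simp [last_eq_zero, init_eq_zero]
      · have hℓ : (ℓ : ℤ) ≠ 0 := Nat.cast_ne_zero.2 (Fact.out : ℓ.Prime).ne_zero
        have hsq : padicValInt ℓ ((ℓ : ℤ) ^ 2) = 2 := by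
          rw [sq, padicValInt.mul hℓ hℓ, padicValInt_self]
        rw [last_eq_zero, add_zero, padicValInt.mul (pow_ne_zero 2 hℓ) init_ne_zero, hsq]
        exact even_two.add (ih fun n ↦ hα _)
    · rw [padicValInt.eq_zero_of_not_dvd]
      · exact Even.zero
      · intro h
        have : (ℓ : ℤ) ∣ (ℓ : ℤ) ^ 2 * digitValue ((ℓ : ℤ) ^ 2) (Fin.init α) :=
          (dvd_pow_self _ two_ne_zero).mul_right _
        exact last_ne_zero (Int.eq_zero_of_abs_lt_dvd ((dvd_add_right this).1 h) (hα _))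

end DigitValue

section EvenValuation

lemma mem_Gamma_iff {m : ℕ} : m ∈ Gamma ↔ Odd (padicValNat 2 m) := by
  constructor
  · rintro ⟨k, l, hk, hl, rfl⟩
    have hodd : ¬ 2 ∣ 2 * k - 1 := by omega
    rw [padicValNat.mul (by omega) (by positivity), padicValNat.eq_zero_of_not_dvd hodd,
      padicValNat.prime_pow]
    exact ⟨l - 1, by omega⟩
  · rintro ⟨j, hj⟩
    have hm : m ≠ 0 := by rintro rfl; simp at hj
    obtain ⟨u, hu⟩ := pow_padicValNat_dvd (p := 2) (n := m)
    have hodd : ¬ 2 ∣ u := by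
      rintro ⟨v, rfl⟩
      refine pow_succ_padicValNat_not_dvd (p := 2) hm ⟨v, ?_⟩
      rw [pow_succ, mul_assoc, ← hu]
    refine ⟨(u + 1) / 2, j + 1, by omega, by omega, ?_⟩
    rw [show 2 * ((u + 1) / 2) - 1 = u by omega, show 2 * (j + 1) - 1 = 2 * j + 1 by omega, ← hj,
      mul_comm]
    exact hu

lemma notMem_Gamma_iff {m : ℕ} : m ∉ Gamma ↔ Even (padicValNat 2 m) := by
  rw [mem_Gamma_iff, Nat.not_odd_iff_even]

lemma even_padicValNat_of_coprime {ℓ p q m n : ℕ} [hℓ : Fact ℓ.Prime] (hpq : p.Coprime q)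
    (hm : m ≠ 0) (hn : n ≠ 0) (hm_even : Even (padicValNat ℓ m)) (hn_even : Even (padicValNat ℓ n))
    (h : p * n = q * m) : Even (padicValNat ℓ p) := by
  obtain rfl | hp := eq_or_ne p 0
  · simp
  have hq : q ≠ 0 := by
    rintro rfl
    simp [hp, hn] at h
  have hval := congrArg (padicValNat ℓ) h
  rw [padicValNat.mul hp hn, padicValNat.mul hq hm] at hval
  by_cases hdvd : ℓ ∣ p
  · have : ¬ ℓ ∣ q := fun hq ↦ Nat.not_coprime_of_dvd_of_dvd hℓ.out.one_lt hdvd hq hpq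
    rw [padicValNat.eq_zero_of_not_dvd this, zero_add] at hval
    rw [← hval, Nat.even_add] at hm_even
    exact hm_even.2 hn_even
  · simp [padicValNat.eq_zero_of_not_dvd hdvd]

lemma exists_coprime_div_eq_of_even_padicValNat {F : Type*} [Field F] [CharZero F] {ℓ m n : ℕ}
    [Fact ℓ.Prime] (hm : m ≠ 0) (hn : n ≠ 0) (hm_even : Even (padicValNat ℓ m))
    (hn_even : Even (padicValNat ℓ n)) :
    ∃ p q : ℕ, 0 < p ∧ 0 < q ∧ p.Coprime q ∧ (m : F) / n = (p : F) / q ∧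
      Even (padicValNat ℓ p) ∧ Even (padicValNat ℓ q) := by
  obtain ⟨p, q, hpq, hmp, hnq⟩ := Nat.exists_coprime m n
  have hcross : p * n = q * m := by
    generalize m.gcd n = g at hmp hnq
    rw [hmp, hnq]
    ring
  have hp : 0 < p := Nat.pos_of_ne_zero (left_ne_zero_of_mul (hmp ▸ hm))
  have hq : 0 < q := Nat.pos_of_ne_zero (left_ne_zero_of_mul (hnq ▸ hn))
  refine ⟨p, q, hp, hq, hpq, ?_, even_padicValNat_of_coprime hpq hm hn hm_even hn_even hcross,
    even_padicValNat_of_coprime hpq.symm hn hm hn_even hm_even hcross.symm⟩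
  rw [div_eq_div_iff (Nat.cast_ne_zero.2 hn) (Nat.cast_ne_zero.2 hq.ne')]
  exact_mod_cast (mul_comm m q).trans hcross.symm

end EvenValuation

section SignedDigits

variable {t : ℝ}

lemma mem_Omega_iff {x : ℝ} :
    x ∈ Omega t ↔ ∃ a ∈ ({0, 1} : Set ℤ), ∃ b ∈ ({0, 1} : Set ℤ), x = 3 * (a + t * b) := by
  simp only [Omega, Set.mem_insert_iff, Set.mem_singleton_iff, exists_eq_or_imp, exists_eq_left]
  push_cast
  ring_nf
  tauto

lemma abs_le_one_iff_exists_sub {a : ℤ} :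
    |a| ≤ 1 ↔ ∃ x ∈ ({0, 1} : Set ℤ), ∃ y ∈ ({0, 1} : Set ℤ), a = x - y := by
  simp only [Set.mem_insert_iff, Set.mem_singleton_iff, exists_eq_or_imp, exists_eq_left,
    Int.abs_le_one_iff]
  omega

lemma mem_Omega_sub_Omega_iff {z : ℝ} :
    z ∈ Omega t - Omega t ↔ ∃ a b : ℤ, |a| ≤ 1 ∧ |b| ≤ 1 ∧ z = 3 * (a - t * b) := by
  simp only [Set.mem_sub, mem_Omega_iff, abs_le_one_iff_exists_sub]
  constructor
  · rintro ⟨_, ⟨a, ha, b, hb, rfl⟩, _, ⟨a', ha', b', hb', rfl⟩, rfl⟩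
    exact ⟨a - a', b' - b, ⟨a, ha, a', ha', rfl⟩, ⟨b', hb', b, hb, rfl⟩, by push_cast; ring⟩
  · rintro ⟨_, _, ⟨a, ha, a', ha', rfl⟩, ⟨b', hb', b, hb, rfl⟩, rfl⟩
    exact ⟨_, ⟨a, ha, b, hb, rfl⟩, _, ⟨a', ha', b', hb', rfl⟩, by push_cast; ring⟩

lemma hasExactOverlap_iff_exists_sub :
    HasExactOverlap t ↔
      ∃ (k : ℕ) (δ : Fin k → ℝ), (∀ n, δ n ∈ Omega t - Omega t) ∧ δ ≠ 0 ∧ digitValue 4 δ = 0 := by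
  simp only [HasExactOverlap, sum_div_pow_eq_digitValue_div (four_ne_zero : (4 : ℝ) ≠ 0),
    div_left_inj' (pow_ne_zero _ (four_ne_zero : (4 : ℝ) ≠ 0))]
  constructor
  · rintro ⟨k, -, c, d, hc, hd, hne, h⟩
    exact ⟨k, c - d, fun n ↦ Set.sub_mem_sub (hc n) (hd n), sub_ne_zero.2 hne, by
      rw [map_sub, h, sub_self]⟩
  · rintro ⟨k, δ, hδ, hne, h⟩
    choose c hc d hd hcd using fun n ↦ Set.mem_sub.1 (hδ n)
    obtain rfl : c - d = δ := funext hcd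
    refine ⟨k, ?_, c, d, hc, hd, sub_ne_zero.1 hne, ?_⟩
    · rw [Nat.pos_iff_ne_zero]
      rintro rfl
      exact hne (Subsingleton.elim _ _)
    · rwa [map_sub, sub_eq_zero] at h

lemma digitValue_intCast_sub_mul {k : ℕ} (b : ℤ) (α β : Fin k → ℤ) :
    digitValue (b : ℝ) (fun n ↦ (α n : ℝ) - t * β n) =
      (digitValue b α : ℤ) - t * (digitValue b β : ℤ) := by
  have hcast (γ : Fin k → ℤ) : digitValue (b : ℝ) (fun n ↦ (γ n : ℝ)) = (digitValue b γ : ℤ) :=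
    (map_digitValue (Int.castRingHom ℝ) b γ).symm
  rw [← hcast, ← hcast, ← smul_eq_mul, ← map_smul, ← map_sub]
  rfl

lemma digitValue_three_mul_sub_eq_zero_iff {k : ℕ} (α β : Fin k → ℤ) :
    digitValue 4 (fun n ↦ 3 * ((α n : ℝ) - t * β n)) = 0 ↔
      ((digitValue 4 α : ℤ) : ℝ) = t * (digitValue 4 β : ℤ) := by
  have hsmul : digitValue 4 (fun n ↦ 3 * ((α n : ℝ) - t * β n)) =
      3 * digitValue ((4 : ℤ) : ℝ) (fun n ↦ (α n : ℝ) - t * β n) := by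
    rw [← smul_eq_mul, ← map_smul]
    rfl
  rw [hsmul, digitValue_intCast_sub_mul, mul_eq_zero_iff_left three_ne_zero, sub_eq_zero]

lemma hasExactOverlap_iff_exists_signed (ht : |t| ≠ 1) :
    HasExactOverlap t ↔
      ∃ (k : ℕ) (α β : Fin k → ℤ), (∀ n, |α n| ≤ 1) ∧ (∀ n, |β n| ≤ 1) ∧ α ≠ 0 ∧
        ((digitValue 4 α : ℤ) : ℝ) = t * (digitValue 4 β : ℤ) := by
  rw [hasExactOverlap_iff_exists_sub]
  constructor
  · rintro ⟨k, δ, hδ, hne, h⟩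
    choose α β hα hβ hαβ using fun n ↦ mem_Omega_sub_Omega_iff.1 (hδ n)
    obtain rfl := funext hαβ
    rw [digitValue_three_mul_sub_eq_zero_iff] at h
    refine ⟨k, α, β, hα, hβ, ?_, h⟩
    rintro rfl
    have hmul : t = 0 ∨ digitValue 4 β = 0 := by simpa using h
    refine hne (funext fun n ↦ ?_)
    obtain rfl | hβ_zero := hmul
    · simp
    · have : β = 0 := eq_zero_of_digitValue_eq_zero (fun n ↦ (hβ n).trans_lt (by norm_num)) hβ_zero
      simp [this]
  · rintro ⟨k, α, β, hα, hβ, hne, h⟩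
    refine ⟨k, _, fun n ↦ mem_Omega_sub_Omega_iff.2 ⟨α n, β n, hα n, hβ n, rfl⟩, ?_,
      (digitValue_three_mul_sub_eq_zero_iff α β).2 h⟩
    obtain ⟨n, hn⟩ := Function.ne_iff.1 hne
    intro hzero
    have hαβ : |(α n : ℝ)| = |t| * |(β n : ℝ)| := by
      have : 3 * ((α n : ℝ) - t * β n) = 0 := congrFun hzero n
      rw [← abs_mul, ← sub_eq_zero.1 ((mul_eq_zero_iff_left three_ne_zero).1 this)]
    have hα_one : |α n| = 1 := le_antisymm (hα n) (Int.one_le_abs hn)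
    have hβ_one : |β n| = 1 := by
      refine le_antisymm (hβ n) (Int.one_le_abs fun hβn ↦ hn ?_)
      simpa [hβn] using hαβ
    rw [← Int.cast_abs, ← Int.cast_abs, hα_one, hβ_one] at hαβ
    exact ht (by simpa using hαβ.symm)

end SignedDigits

section CosineProducts

lemma exists_pos_le_prod_range_of_summable {f : ℕ → ℝ} (hf_pos : ∀ i, 0 < f i)
    (hf : Summable fun i ↦ f i - 1) : ∃ c > 0, ∀ n, c ≤ ∏ i ∈ Finset.range n, f i := by
  have hlog : Summable fun i ↦ |Real.log (f i)| := by
    simpa using (Real.summable_log_one_add_of_summable hf).abs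
  refine ⟨Real.exp (-∑' i, |Real.log (f i)|), Real.exp_pos _, fun n ↦ ?_⟩
  rw [← Real.exp_log (Finset.prod_pos fun i _ ↦ hf_pos i), Real.exp_le_exp,
    Real.log_prod fun i _ ↦ (hf_pos i).ne']
  calc -∑' i, |Real.log (f i)| ≤ -∑ i ∈ Finset.range n, |Real.log (f i)| :=
        neg_le_neg (hlog.sum_le_tsum _ fun i _ ↦ abs_nonneg _)
    _ ≤ ∑ i ∈ Finset.range n, Real.log (f i) := by
        rw [← Finset.sum_neg_distrib]
        exact Finset.sum_le_sum fun i _ ↦ neg_abs_le _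

lemma exists_pos_le_prod_range_abs_cos {u : ℕ → ℝ} (hu : Summable fun i ↦ u i ^ 2)
    (hcos : ∀ i, Real.cos (u i) ≠ 0) :
    ∃ c > 0, ∀ n, c ≤ ∏ i ∈ Finset.range n, |Real.cos (u i)| := by
  refine exists_pos_le_prod_range_of_summable (fun i ↦ abs_pos.2 (hcos i)) ?_
  refine .of_norm_bounded (hu.div_const 2) fun i ↦ ?_
  rw [Real.norm_eq_abs, abs_sub_comm, abs_of_nonneg (sub_nonneg.2 (Real.abs_cos_le_one _))]
  linarith [Real.one_sub_sq_div_two_le_cos (x := u i), le_abs_self (Real.cos (u i))]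

lemma cos_pi_mul_div_four_pow_ne_zero {p : ℕ} (hp : Even (padicValNat 2 p)) (i : ℕ) :
    Real.cos (Real.pi * (p * (1 / 4 ^ (i + 1)))) ≠ 0 := by
  rw [Ne, Real.cos_eq_zero_iff]
  rintro ⟨m, hm⟩
  have hp_eq : (p : ℤ) = (2 * m + 1) * 2 ^ (2 * i + 1) := by
    have : (p : ℝ) = (2 * m + 1) * 2 ^ (2 * i + 1) := by
      rw [pow_succ, pow_mul, show (2 : ℝ) ^ 2 = 4 by norm_num]
      field_simp at hm
      rw [pow_succ] at hm
      linarith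
    exact_mod_cast this
  have hval : padicValInt 2 p = 2 * i + 1 := by
    have hodd : ¬ ((2 : ℕ) : ℤ) ∣ 2 * m + 1 := by omega
    rw [hp_eq, padicValInt.mul (by omega) (by positivity), padicValInt.eq_zero_of_not_dvd hodd,
      zero_add, padicValInt, Int.natAbs_pow]
    exact padicValNat.prime_pow _
  rw [padicValInt.of_nat] at hval
  rw [hval] at hp
  exact Nat.not_even_bit1 i hp

lemma exists_pos_le_prod_abs_cos_pi {p : ℕ} (hp : Even (padicValNat 2 p)) :
    ∃ c > 0, ∀ n, c ≤ ∏ i ∈ Finset.range n, |Real.cos (Real.pi * (p * (1 / 4 ^ (i + 1))))| := by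
  refine exists_pos_le_prod_range_abs_cos ?_ (cos_pi_mul_div_four_pow_ne_zero hp)
  have hgeom : Summable fun i : ℕ ↦ (1 / 16 : ℝ) ^ i :=
    summable_geometric_of_lt_one (by norm_num) (by norm_num)
  refine (hgeom.mul_left ((Real.pi * p / 4) ^ 2)).congr fun i ↦ ?_
  rw [show (1 / 16 : ℝ) = (1 / 4) ^ 2 by norm_num, ← pow_mul, mul_comm 2 i, pow_mul, ← mul_pow,
    one_div_pow, pow_succ 4 i]
  ring

end CosineProducts

section Characters

lemma fourierChar_eq_one_iff {x : ℝ} : 𝐞 x = 1 ↔ ∃ n : ℤ, x = n := by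
  rw [Real.fourierChar_apply', Circle.exp_eq_one]
  refine exists_congr fun n ↦ ?_
  rw [mul_comm, mul_left_inj' Real.two_pi_pos.ne']

lemma norm_one_add_fourierChar (x : ℝ) : ‖1 + (𝐞 x : ℂ)‖ = 2 * |Real.cos (Real.pi * x)| := by
  have hfactor : 1 + (𝐞 x : ℂ) = 𝐞 (x / 2) * (2 * Real.cos (Real.pi * x) : ℝ) := by
    push_cast
    rw [Complex.two_cos, Real.fourierChar_apply, Real.fourierChar_apply, mul_add, ← Complex.exp_add,
      ← Complex.exp_add, add_comm]
    congr 1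
    · push_cast; ring_nf
    · rw [eq_comm, Complex.exp_eq_one_iff]
      exact ⟨0, by push_cast; ring⟩
  rw [hfactor, norm_mul, Circle.norm_coe, one_mul, Complex.norm_real, Real.norm_eq_abs, abs_mul,
    abs_two]

lemma sum_range_fourierChar_mul_eq_zero {M : ℕ} {θ : ℝ} (hM : 𝐞 (M * θ) = 1) (hθ : 𝐞 θ ≠ 1) :
    ∑ x ∈ Finset.range M, (𝐞 (x * θ) : ℂ) = 0 := by
  have hpow (x : ℕ) : (𝐞 (x * θ) : ℂ) = (𝐞 θ : ℂ) ^ x := by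
    rw [← nsmul_eq_mul, AddChar.map_nsmul_eq_pow, Circle.coe_pow]
  have hne : (𝐞 θ : ℂ) ≠ 1 := by rwa [Ne, Circle.coe_eq_one]
  simp only [hpow]
  rw [geom_sum_eq hne, ← hpow, hM, Circle.coe_one, sub_self, zero_div]

lemma fourierChar_pow_sub_pow_div_ne_one {b k : ℕ} (hb : 2 ≤ b) {i j : Fin k} (hij : i ≠ j) :
    𝐞 (((b : ℝ) ^ (j : ℕ) - (b : ℝ) ^ (i : ℕ)) / (b : ℝ) ^ k) ≠ 1 := by
  rw [Ne, fourierChar_eq_one_iff]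
  rintro ⟨n, hn⟩
  have hb' : (1 : ℤ) < b := by exact_mod_cast hb
  rw [div_eq_iff (by positivity)] at hn
  have hdvd : (b : ℤ) ^ k ∣ (b : ℤ) ^ (j : ℕ) - (b : ℤ) ^ (i : ℕ) :=
    ⟨n, by rw [mul_comm]; exact_mod_cast hn⟩
  have hlt (l : Fin k) : 0 < (b : ℤ) ^ (l : ℕ) ∧ (b : ℤ) ^ (l : ℕ) < (b : ℤ) ^ k :=
    ⟨by positivity, pow_lt_pow_right₀ hb' l.isLt⟩
  have hzero := Int.eq_zero_of_abs_lt_dvd hdvd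
    (abs_sub_lt_of_nonneg_of_lt (hlt j).1.le (hlt j).2 (hlt i).1.le (hlt i).2)
  exact hij (Fin.ext (pow_right_injective₀ (by omega) hb'.ne' (sub_eq_zero.1 hzero)).symm)

lemma sum_conj_fourierChar_mul_fourierChar {b : ℕ} (hb : 2 ≤ b) (K : ℕ) {k : ℕ} (i j : Fin k) :
    ∑ x : Fin (K * b ^ k), conj (𝐞 (x * ((b : ℝ) ^ (i : ℕ) / (b : ℝ) ^ k)) : ℂ) *
        𝐞 (x * ((b : ℝ) ^ (j : ℕ) / (b : ℝ) ^ k)) =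
      if i = j then ((K * b ^ k : ℕ) : ℂ) else 0 := by
  set θ : ℝ := ((b : ℝ) ^ (j : ℕ) - (b : ℝ) ^ (i : ℕ)) / (b : ℝ) ^ k with hθ
  have hmul (x : ℕ) : conj (𝐞 (x * ((b : ℝ) ^ (i : ℕ) / (b : ℝ) ^ k)) : ℂ) *
      𝐞 (x * ((b : ℝ) ^ (j : ℕ) / (b : ℝ) ^ k)) = 𝐞 (x * θ) := by
    rw [← Circle.coe_inv_eq_conj, ← AddChar.map_neg_eq_inv, ← Circle.coe_mul,
      ← AddChar.map_add_eq_mul, hθ]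
    congr 2
    ring
  simp only [hmul]
  split_ifs with hij
  · simp [hθ, hij]
  · rw [Fin.sum_univ_eq_sum_range (fun x ↦ (𝐞 (x * θ) : ℂ))]
    refine sum_range_fourierChar_mul_eq_zero ?_ (fourierChar_pow_sub_pow_div_ne_one hb hij)
    refine fourierChar_eq_one_iff.2 ⟨K * (b ^ (j : ℕ) - b ^ (i : ℕ)), ?_⟩
    rw [hθ]
    push_cast
    field_simp

lemma sum_sq_norm_sum_le_of_orthogonal {ι X : Type*} [Fintype ι] [DecidableEq ι] [Fintype X]
    {N : ℝ} (hN : 0 < N) (e : ι → X → ℂ)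
    (he : ∀ i j, ∑ x, conj (e i x) * e j x = if i = j then (N : ℂ) else 0) (S : Finset X) :
    ∑ i, ‖∑ x ∈ S, e i x‖ ^ 2 ≤ N * S.card := by
  classical
  have hsqrt : (√N : ℂ) * √N = N := by rw [← Complex.ofReal_mul, Real.mul_self_sqrt hN.le]
  have hN' : (N : ℂ) ≠ 0 := Complex.ofReal_ne_zero.2 hN.ne'
  let v (i : ι) : EuclideanSpace ℂ X := WithLp.toLp 2 fun x ↦ e i x / √N
  let f : EuclideanSpace ℂ X := WithLp.toLp 2 fun x ↦ if x ∈ S then 1 else 0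
  have orthonormal_v : Orthonormal ℂ v := by
    rw [orthonormal_iff_ite]
    intro i j
    calc inner ℂ (v i) (v j) = (∑ x, conj (e i x) * e j x) / N := by
          simp only [v, PiLp.inner_apply, RCLike.inner_apply, map_div₀, Complex.conj_ofReal,
            Finset.sum_div, ← hsqrt]
          exact Finset.sum_congr rfl fun x _ ↦ by ring
      _ = if i = j then 1 else 0 := by
          rw [he]
          split_ifs <;> simp [hN']
  have norm_f : ‖f‖ ^ 2 = S.card := by
    simp [EuclideanSpace.norm_sq_eq, f, apply_ite]
  have inner_v_f (i : ι) : ‖inner ℂ (v i) f‖ ^ 2 = ‖∑ x ∈ S, e i x‖ ^ 2 / N := by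
    have : inner ℂ (v i) f = conj ((∑ x ∈ S, e i x) / √N) := by
      simp [v, f, PiLp.inner_apply, Finset.sum_div]
    rw [this, RCLike.norm_conj, norm_div, div_pow, Complex.norm_real, Real.norm_eq_abs, sq_abs,
      Real.sq_sqrt hN.le]
  have bessel := orthonormal_v.sum_inner_products_le f (s := Finset.univ)
  simp only [inner_v_f, norm_f, ← Finset.sum_div] at bessel
  rwa [div_le_iff₀' hN] at bessel

end Characters

section Mask

variable {ι : Type*} [Fintype ι]

/-- The mask `θ ↦ ∑ i, exp (2πi d_i θ)` of a digit system `d`, i.e. the (unnormalized) Fourier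
transform of the counting measure on the digits. -/
noncomputable def digitMask (d : ι → ℕ) (θ : ℝ) : ℂ := ∑ i, (𝐞 (d i * θ) : ℂ)

lemma digitMask_natCast (d : ι → ℕ) (n : ℕ) : digitMask d n = Fintype.card ι := by
  have hone (i : ι) : 𝐞 ((d i : ℝ) * n) = 1 :=
    fourierChar_eq_one_iff.2 ⟨d i * n, by push_cast; rfl⟩
  simp [digitMask, hone]

lemma sum_fourierChar_digitValue (b : ℕ) (d : ι → ℕ) (k : ℕ) (θ : ℝ) :
    ∑ x : Fin k → ι, (𝐞 ((digitValue b (d ∘ x) : ℕ) * θ) : ℂ) =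
      ∏ n : Fin k, digitMask d ((b : ℝ) ^ (n.rev : ℕ) * θ) := by
  simp only [digitMask, Fintype.prod_sum]
  refine Finset.sum_congr rfl fun x _ ↦ ?_
  have hvalue : (digitValue b (d ∘ x) : ℕ) * θ = ∑ n, d (x n) * ((b : ℝ) ^ (n.rev : ℕ) * θ) := by
    rw [digitValue_apply]
    push_cast
    simp only [Finset.sum_mul, mul_assoc, Function.comp_apply]
  rw [hvalue]
  exact map_prod (Circle.coeHom.comp 𝐞.toMonoidHom) _ _

lemma prod_digitMask_eq {b : ℕ} (hb : b ≠ 0) (d : ι → ℕ) (i r : ℕ) :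
    ∏ n : Fin (i + r), digitMask d ((b : ℝ) ^ (n.rev : ℕ) * ((b : ℝ) ^ i / (b : ℝ) ^ (i + r))) =
      (Fintype.card ι : ℂ) ^ i * ∏ m ∈ Finset.range r, digitMask d (1 / (b : ℝ) ^ (m + 1)) := by
  have hb' : (b : ℝ) ≠ 0 := Nat.cast_ne_zero.2 hb
  have harg (n : Fin (i + r)) : (b : ℝ) ^ (n.rev : ℕ) * ((b : ℝ) ^ i / (b : ℝ) ^ (i + r)) =
      (b : ℝ) ^ i / (b : ℝ) ^ ((n : ℕ) + 1) := by
    rw [← pow_rev_mul_pow_succ (b : ℝ) n]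
    field_simp
  have integral_factor (n : ℕ) (hn : n < i) :
      digitMask d ((b : ℝ) ^ i / (b : ℝ) ^ (n + 1)) = Fintype.card ι := by
    rw [← digitMask_natCast d (b ^ (i - (n + 1))), Nat.cast_pow, pow_sub₀ _ hb' hn, div_eq_mul_inv]
  have fractional_factor (m : ℕ) :
      digitMask d ((b : ℝ) ^ i / (b : ℝ) ^ (i + m + 1)) = digitMask d (1 / (b : ℝ) ^ (m + 1)) := by
    congr 1
    rw [add_assoc, pow_add (b : ℝ) i]
    field_simp
  simp only [harg]
  rw [Fin.prod_univ_eq_prod_range (fun n ↦ digitMask d ((b : ℝ) ^ i / (b : ℝ) ^ (n + 1))),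
    Finset.prod_range_add, Finset.prod_congr rfl fun n hn ↦
      integral_factor n (Finset.mem_range.1 hn)]
  simp only [fractional_factor, Finset.prod_const, Finset.card_range]

lemma mul_card_pow_le_norm_sum {b : ℕ} (hb : b ≠ 0) [Nonempty ι] {d : ι → ℕ} {c : ℝ}
    (hc : ∀ r, c ≤ ∏ m ∈ Finset.range r, ‖digitMask d (1 / (b : ℝ) ^ (m + 1))‖ / Fintype.card ι)
    {k : ℕ} (i : Fin k) :
    c * (Fintype.card ι : ℝ) ^ k ≤ ‖∑ x : Fin k → ι,
      (𝐞 ((digitValue b (d ∘ x) : ℕ) * ((b : ℝ) ^ (i : ℕ) / (b : ℝ) ^ k)) : ℂ)‖ := by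
  obtain ⟨r, hr⟩ := Nat.exists_eq_add_of_le i.isLt.le
  generalize (i : ℕ) = i at hr
  subst hr
  have hcard : (0 : ℝ) < Fintype.card ι := Nat.cast_pos.2 Fintype.card_pos
  have hr := hc r
  rw [Finset.prod_div_distrib, Finset.prod_const, Finset.card_range,
    le_div_iff₀ (pow_pos hcard r)] at hr
  rw [sum_fourierChar_digitValue, prod_digitMask_eq hb, norm_mul, norm_pow, Complex.norm_natCast,
    norm_prod, pow_add, mul_left_comm]
  exact mul_le_mul_of_nonneg_left hr (by positivity)

/-- If the values of the digit strings of length `k` are distinct, then the indicator function of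
the set of values has too little `ℓ²` mass for its `k` Fourier coefficients at the frequencies
`b ^ i / b ^ k` to be all large. -/
lemma mul_sq_le_of_injective_digitValue {b K : ℕ} (hb : 2 ≤ b) (hbι : b ≤ Fintype.card ι)
    (hK : 0 < K) {d : ι → ℕ} (hd : ∀ i, d i ≤ K) {c : ℝ} (hc_nonneg : 0 ≤ c)
    (hc : ∀ r, c ≤ ∏ m ∈ Finset.range r, ‖digitMask d (1 / (b : ℝ) ^ (m + 1))‖ / Fintype.card ι)
    {k : ℕ} (hinj : Function.Injective fun x : Fin k → ι ↦ digitValue b (d ∘ x)) :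
    k * c ^ 2 ≤ K := by
  have : Nonempty ι := Fintype.card_pos_iff.1 (by omega)
  let value : (Fin k → ι) ↪ Fin (K * b ^ k) :=
    ⟨fun x ↦ ⟨_, digitValue_lt hb hK fun n ↦ hd (x n)⟩, fun x y h ↦ hinj (Fin.val_eq_of_eq h)⟩
  have bessel := sum_sq_norm_sum_le_of_orthogonal (N := (K * b ^ k : ℕ)) (by positivity)
    (fun (i : Fin k) (x : Fin (K * b ^ k)) ↦ (𝐞 (x * ((b : ℝ) ^ (i : ℕ) / (b : ℝ) ^ k)) : ℂ))
    (fun i j ↦ by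
      simpa only [Complex.ofReal_natCast] using sum_conj_fourierChar_mul_fourierChar hb K i j)
    (Finset.univ.map value)
  simp only [Finset.sum_map, Finset.card_map, Finset.card_univ, Fintype.card_fun,
    Fintype.card_fin] at bessel
  set C : ℝ := (Fintype.card ι : ℝ) ^ k
  have hC_pos : 0 < C := by positivity
  have hbC : (b : ℝ) ^ k ≤ C := pow_le_pow_left₀ (Nat.cast_nonneg b) (Nat.cast_le.2 hbι) k
  have key : k * c ^ 2 * C ^ 2 ≤ K * C ^ 2 :=
    calc k * c ^ 2 * C ^ 2 = ∑ _i : Fin k, (c * C) ^ 2 := by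
          rw [Finset.sum_const, Finset.card_univ, Fintype.card_fin, nsmul_eq_mul]
          ring
      _ ≤ K * (b : ℝ) ^ k * C := by
          refine le_trans (Finset.sum_le_sum fun i _ ↦ ?_) (bessel.trans_eq (by push_cast; rfl))
          exact pow_le_pow_left₀ (by positivity) (mul_card_pow_le_norm_sum (by omega) hc i) 2
      _ ≤ K * C * C := by gcongr
      _ = K * C ^ 2 := by ring
  exact le_of_mul_le_mul_right key (pow_pos hC_pos 2)

lemma exists_not_injective_digitValue {b : ℕ} (hb : 2 ≤ b) (hbι : b ≤ Fintype.card ι)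
    {d : ι → ℕ} {c : ℝ} (hc_pos : 0 < c)
    (hc : ∀ r, c ≤ ∏ m ∈ Finset.range r, ‖digitMask d (1 / (b : ℝ) ^ (m + 1))‖ / Fintype.card ι) :
    ∃ k : ℕ, ¬ Function.Injective fun x : Fin k → ι ↦ digitValue b (d ∘ x) := by
  set K : ℕ := Finset.univ.sup d + 1
  have hd (i : ι) : d i ≤ K := (Finset.le_sup (Finset.mem_univ i)).trans (Nat.le_succ _)
  obtain ⟨k, hk⟩ := exists_nat_gt ((K : ℝ) / c ^ 2)
  refine ⟨k, fun hinj ↦ ?_⟩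
  rw [div_lt_iff₀ (by positivity)] at hk
  exact hk.not_ge (mul_sq_le_of_injective_digitValue hb hbι (Nat.succ_pos _) hd hc_pos.le hc hinj)

lemma norm_digitMask_fin_two_prod (p q : ℕ) (θ : ℝ) :
    ‖digitMask (fun x : Fin 2 × Fin 2 ↦ p * x.1 + q * x.2) θ‖ / Fintype.card (Fin 2 × Fin 2) =
      |Real.cos (Real.pi * (p * θ))| * |Real.cos (Real.pi * (q * θ))| := by
  have hfactor : digitMask (fun x : Fin 2 × Fin 2 ↦ p * x.1 + q * x.2) θ =
      (1 + (𝐞 (p * θ) : ℂ)) * (1 + (𝐞 (q * θ) : ℂ)) := by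
    simp only [digitMask, Fintype.sum_prod_type, Fin.sum_univ_two, Fin.val_zero, Fin.val_one,
      mul_zero, mul_one, Nat.cast_zero, Nat.cast_add, zero_mul, add_mul,
      AddChar.map_add_eq_mul, AddChar.map_zero_eq_one, Circle.coe_mul, Circle.coe_one]
    ring
  rw [hfactor, norm_mul, norm_one_add_fourierChar, norm_one_add_fourierChar]
  simp only [Fintype.card_prod, Fintype.card_fin]
  push_cast
  ring

end Mask

section Overlap

lemma digitValue_natCast_mul_add {k : ℕ} (b p q : ℕ) (x y : Fin k → ℕ) :
    ((digitValue b fun n ↦ p * x n + q * y n : ℕ) : ℤ) =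
      p * digitValue (b : ℤ) (fun n ↦ (x n : ℤ)) + q * digitValue (b : ℤ) (fun n ↦ (y n : ℤ)) := by
  simp only [digitValue_apply]
  push_cast
  rw [Finset.mul_sum, Finset.mul_sum, ← Finset.sum_add_distrib]
  exact Finset.sum_congr rfl fun n _ ↦ by ring

lemma exists_digit_pairs_ne_of_even_padicValNat {p q : ℕ} (hp : Even (padicValNat 2 p))
    (hq : Even (padicValNat 2 q)) :
    ∃ (k : ℕ) (x y : Fin k → Fin 2 × Fin 2), x ≠ y ∧
      digitValue 4 (fun n ↦ p * ((x n).1 : ℕ) + q * ((x n).2 : ℕ)) =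
        digitValue 4 (fun n ↦ p * ((y n).1 : ℕ) + q * ((y n).2 : ℕ)) := by
  obtain ⟨c, hc_pos, hc⟩ := exists_pos_le_prod_abs_cos_pi hp
  obtain ⟨c', hc'_pos, hc'⟩ := exists_pos_le_prod_abs_cos_pi hq
  obtain ⟨k, hk⟩ := exists_not_injective_digitValue (b := 4) (ι := Fin 2 × Fin 2)
    (d := fun x ↦ p * x.1 + q * x.2) (by norm_num) (by simp) (mul_pos hc_pos hc'_pos) fun r ↦ by
      simp only [norm_digitMask_fin_two_prod, Finset.prod_mul_distrib, Nat.cast_ofNat]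
      exact mul_le_mul (hc r) (hc' r) hc'_pos.le (Finset.prod_nonneg fun _ _ ↦ abs_nonneg _)
  obtain ⟨x, y, heq, hne⟩ := Function.not_injective_iff.1 hk
  exact ⟨k, x, y, hne, heq⟩

lemma abs_sub_fin_two_le_one (a b : Fin 2) : |((a : ℕ) : ℤ) - (b : ℕ)| ≤ 1 :=
  abs_le.2 ⟨by omega, by omega⟩

lemma exists_signed_mul_eq_mul {p q : ℕ} (hp_ne : p ≠ 0) (hp : Even (padicValNat 2 p))
    (hq : Even (padicValNat 2 q)) :
    ∃ (k : ℕ) (α β : Fin k → ℤ), (∀ n, |α n| ≤ 1) ∧ (∀ n, |β n| ≤ 1) ∧ α ≠ 0 ∧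
      q * digitValue 4 α = p * digitValue 4 β := by
  obtain ⟨k, x, y, hne, heq⟩ := exists_digit_pairs_ne_of_even_padicValNat hp hq
  let α : Fin k → ℤ := (fun n ↦ (((x n).2 : ℕ) : ℤ)) - fun n ↦ (((y n).2 : ℕ) : ℤ)
  let β : Fin k → ℤ := (fun n ↦ (((y n).1 : ℕ) : ℤ)) - fun n ↦ (((x n).1 : ℕ) : ℤ)
  have hα (n) : |α n| ≤ 1 := abs_sub_fin_two_le_one _ _
  have hβ (n) : |β n| ≤ 1 := abs_sub_fin_two_le_one _ _
  have hαβ : q * digitValue 4 α = p * digitValue 4 β := by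
    have := congrArg (Nat.cast : ℕ → ℤ) heq
    rw [digitValue_natCast_mul_add 4, digitValue_natCast_mul_add 4] at this
    simp only [α, β, map_sub, Nat.cast_ofNat] at this ⊢
    linarith
  refine ⟨k, α, β, hα, hβ, fun hα_zero ↦ hne ?_, hαβ⟩
  have hβ_zero : β = 0 := by
    refine eq_zero_of_digitValue_eq_zero (fun n ↦ (hβ n).trans_lt (by norm_num : (1 : ℤ) < 4)) ?_
    simpa [hα_zero, hp_ne] using hαβ.symm
  funext n
  have hα_n : (((x n).2 : ℕ) : ℤ) - (y n).2 = 0 := congrFun hα_zero n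
  have hβ_n : (((y n).1 : ℕ) : ℤ) - (x n).1 = 0 := congrFun hβ_zero n
  exact Prod.ext (Fin.ext (by omega)) (Fin.ext (by omega))

lemma exists_coprime_of_hasExactOverlap {t : ℝ} (ht : |t| ≠ 1) (h : HasExactOverlap t) :
    ∃ p q : ℕ, 0 < p ∧ 0 < q ∧ Nat.Coprime p q ∧ |t| = (p : ℝ) / q ∧ p ∉ Gamma ∧ q ∉ Gamma := by
  obtain ⟨k, α, β, hα, hβ, hα_ne, heq⟩ := (hasExactOverlap_iff_exists_signed ht).1 h
  have heven (γ : Fin k → ℤ) (hγ : ∀ n, |γ n| ≤ 1) :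
      Even (padicValNat 2 (digitValue 4 γ).natAbs) :=
    even_padicValInt_digitValue_sq (ℓ := 2) fun n ↦ (hγ n).trans_lt (by norm_num)
  have hα_value : digitValue 4 α ≠ 0 := fun h ↦
    hα_ne (eq_zero_of_digitValue_eq_zero (fun n ↦ (hα n).trans_lt (by norm_num)) h)
  have hβ_value : digitValue 4 β ≠ 0 := by
    intro h
    simp [h, hα_value] at heq
  have habs : |t| = ((digitValue 4 α).natAbs : ℝ) / (digitValue 4 β).natAbs := by
    rw [eq_div_iff (Nat.cast_ne_zero.2 (Int.natAbs_ne_zero.2 hβ_value)), Nat.cast_natAbs,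
      Nat.cast_natAbs, Int.cast_abs, Int.cast_abs, heq, abs_mul]
  simp only [habs, notMem_Gamma_iff]
  exact exists_coprime_div_eq_of_even_padicValNat (Int.natAbs_ne_zero.2 hα_value)
    (Int.natAbs_ne_zero.2 hβ_value) (heven α hα) (heven β hβ)

lemma hasExactOverlap_of_abs_eq_div {t : ℝ} (ht : |t| ≠ 1) {p q : ℕ} (hp : 0 < p) (hq : 0 < q)
    (htpq : |t| = (p : ℝ) / q) (hpΓ : p ∉ Gamma) (hqΓ : q ∉ Gamma) : HasExactOverlap t := by
  rw [notMem_Gamma_iff] at hpΓ hqΓ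
  obtain ⟨k, α, β, hα, hβ, hα_ne, heq⟩ := exists_signed_mul_eq_mul hp.ne' hpΓ hqΓ
  have hvalue : ((digitValue 4 α : ℤ) : ℝ) = |t| * (digitValue 4 β : ℤ) := by
    rw [htpq, div_mul_eq_mul_div, eq_div_iff (Nat.cast_ne_zero.2 hq.ne'), mul_comm]
    exact_mod_cast heq
  rw [hasExactOverlap_iff_exists_signed ht]
  obtain habs | habs := abs_choice t
  · exact ⟨k, α, β, hα, hβ, hα_ne, by rw [hvalue, habs]⟩
  · exact ⟨k, α, -β, hα, by simpa using hβ, hα_ne, by rw [hvalue, habs, map_neg]; push_cast; ring⟩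

theorem exact_overlap_iff_general (t : ℝ) (ht : |t| ≠ 1) :
    HasExactOverlap t ↔
      ∃ p q : ℕ, 0 < p ∧ 0 < q ∧ Nat.Coprime p q ∧ |t| = (p : ℝ) / q ∧
        p ∉ Gamma ∧ q ∉ Gamma :=
  ⟨exists_coprime_of_hasExactOverlap ht, fun ⟨_, _, hp, hq, _, htpq, hpΓ, hqΓ⟩ ↦
    hasExactOverlap_of_abs_eq_div ht hp hq htpq hpΓ hqΓ⟩

end Overlap

theorem exact_overlap_iff (t : ℝ) (ht : t ∈ Set.Ioo (0:ℝ) 1) :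
    HasExactOverlap t ↔
      ∃ p q : ℕ, 0 < p ∧ 0 < q ∧ Nat.Coprime p q ∧ t = (p : ℝ) / q ∧
        p ∉ Gamma ∧ q ∉ Gamma := by
  have habs : |t| = t := abs_of_pos ht.1
  simpa only [habs] using exact_overlap_iff_general t (habs.trans_ne ht.2.ne)
end

section
/- The limit as N → ∞ of #(W ∩ [1,N]²)/N² exists and equals 5/(3π²); that is, the number of pairs (p,q) ∈ W with 1 ≤ p ≤ N and 1 ≤ q ≤ N, divided by N², tends to 5/(3π²). -/
open Filter Topology

/-- `W = {(p,q) ∈ ℕ² : p ∉ Γ, q ∉ Γ, p < q, p and q coprime}`. -/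
def W : Set (ℕ × ℕ) :=
  {pq | pq.1 ∉ Gamma ∧ pq.2 ∉ Gamma ∧ pq.1 < pq.2 ∧ Nat.Coprime pq.1 pq.2}

/-!
`Γ` consists of the positive integers with odd `2`-adic valuation, so doubling maps the positive
integers outside `Γ` onto `Γ`. Hence the number `f N` of integers in `[1, N]` outside `Γ` satisfies
`f N + f (N / 2) = N`, which forces `f N = 2N/3 + O(log N)`. Since the complement of `Γ` is
invariant under multiplication by odd numbers and by `4`, its multiples of a squarefree `d` have
density `2/(3d)` for odd `d` and `1/(3d)` for even `d`. Möbius inversion and dominated convergence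
give the density of coprime pairs outside `Γ` as the sum of `μ d / d ^ 2` weighted by `4/9` for odd
`d` and `1/9` for even `d`. As `∑ μ d / d ^ 2 = 6 / π ^ 2` and the even part of this series is
`-1/4` times its odd part, the sum is `10 / (3π ^ 2)`. The only coprime pair on the diagonal is
`(1, 1)`, so the pairs with `p < q` account for half of it.
-/

section CoprimePairs

open scoped ArithmeticFunction.Moebius ArithmeticFunction.zeta Finset

lemma sum_divisors_moebius (n : ℕ) : ∑ d ∈ n.divisors, μ d = if n = 1 then 1 else 0 := by
  rw [← ArithmeticFunction.coe_mul_zeta_apply, ArithmeticFunction.moebius_mul_coe_zeta,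
    ArithmeticFunction.one_apply]

lemma sum_moebius_common_divisors {a N : ℕ} (ha : a ∈ Finset.Icc 1 N) (b : ℕ) :
    ∑ d ∈ Finset.Icc 1 N with d ∣ a ∧ d ∣ b, μ d = if a.Coprime b then 1 else 0 := by
  obtain ⟨ha_pos, haN⟩ := Finset.mem_Icc.mp ha
  have h_divisors : ({d ∈ Finset.Icc 1 N | d ∣ a ∧ d ∣ b} : Finset ℕ) = (a.gcd b).divisors := by
    ext d
    simp only [Finset.mem_filter, Finset.mem_Icc, Nat.mem_divisors, Nat.dvd_gcd_iff]
    constructor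
    · rintro ⟨-, hd⟩
      exact ⟨hd, (Nat.gcd_pos_of_pos_left b ha_pos).ne'⟩
    · rintro ⟨hd, -⟩
      exact ⟨⟨Nat.pos_of_dvd_of_pos hd.1 ha_pos, (Nat.le_of_dvd ha_pos hd.1).trans haN⟩, hd⟩
  rw [h_divisors, sum_divisors_moebius]

lemma card_coprime_pairs_eq_sum_moebius {S : Finset ℕ} {N : ℕ} (hS : S ⊆ Finset.Icc 1 N)
    (T : Finset ℕ) :
    (#{x ∈ S ×ˢ T | x.1.Coprime x.2} : ℤ) =
      ∑ d ∈ Finset.Icc 1 N, μ d * (#{a ∈ S | d ∣ a} * #{b ∈ T | d ∣ b}) := by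
  calc (#{x ∈ S ×ˢ T | x.1.Coprime x.2} : ℤ)
      = ∑ x ∈ S ×ˢ T, if x.1.Coprime x.2 then (1 : ℤ) else 0 := by simp
    _ = ∑ x ∈ S ×ˢ T, ∑ d ∈ Finset.Icc 1 N, if d ∣ x.1 ∧ d ∣ x.2 then μ d else 0 := by
      refine Finset.sum_congr rfl fun x hx => ?_
      rw [← sum_moebius_common_divisors (hS (Finset.mem_product.mp hx).1), Finset.sum_filter]
    _ = ∑ d ∈ Finset.Icc 1 N, ∑ x ∈ S ×ˢ T, if d ∣ x.1 ∧ d ∣ x.2 then μ d else 0 :=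
      Finset.sum_comm
    _ = ∑ d ∈ Finset.Icc 1 N, μ d * (#{a ∈ S | d ∣ a} * #{b ∈ T | d ∣ b}) := by
      refine Finset.sum_congr rfl fun d _ => ?_
      rw [← Finset.sum_filter, Finset.filter_product, Finset.sum_const, Finset.card_product]
      push_cast [nsmul_eq_mul]
      ring

lemma card_filter_product_self_of_symmetric {α : Type*} [LinearOrder α] (S : Finset α)
    (r : α → α → Prop) [DecidableRel r] [Std.Symm r] :
    #{x ∈ S ×ˢ S | r x.1 x.2} =
      2 * #{x ∈ S ×ˢ S | x.1 < x.2 ∧ r x.1 x.2} + #{a ∈ S | r a a} := by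
  have h_split : #{x ∈ S ×ˢ S | r x.1 x.2} = #{x ∈ S ×ˢ S | x.1 < x.2 ∧ r x.1 x.2} +
      #{x ∈ S ×ˢ S | x.2 < x.1 ∧ r x.1 x.2} + #{x ∈ S ×ˢ S | x.1 = x.2 ∧ r x.1 x.2} := by
    simp_rw [Finset.card_filter, ← Finset.sum_add_distrib]
    refine Finset.sum_congr rfl fun x _ => ?_
    rcases lt_trichotomy x.1 x.2 with h | h | h
    · simp [h, h.not_gt, h.ne]
    · simp [h]
    · simp [h, h.not_gt, h.ne']
  have h_swap : #{x ∈ S ×ˢ S | x.2 < x.1 ∧ r x.1 x.2} =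
      #{x ∈ S ×ˢ S | x.1 < x.2 ∧ r x.1 x.2} := by
    refine Finset.card_nbij' Prod.swap Prod.swap ?_ ?_ (fun _ _ => rfl) fun _ _ => rfl <;>
    · intro x hx
      simp only [Finset.mem_coe, Finset.mem_filter, Finset.mem_product] at hx ⊢
      exact ⟨hx.1.symm, hx.2.1, symm hx.2.2⟩
  have h_diag : #{x ∈ S ×ˢ S | x.1 = x.2 ∧ r x.1 x.2} = #{a ∈ S | r a a} := by
    refine Finset.card_nbij' Prod.fst (fun a => (a, a)) ?_ ?_ ?_ fun _ _ => rfl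
    · rintro ⟨a, b⟩ hx
      simp only [Finset.mem_coe, Finset.mem_filter, Finset.mem_product] at hx ⊢
      obtain ⟨⟨ha, -⟩, rfl, hra⟩ := hx
      exact ⟨ha, hra⟩
    · intro a ha
      simpa using ha
    · rintro ⟨a, b⟩ hx
      simpa using (Finset.mem_filter.mp hx).2.1
  rw [h_split, h_swap, h_diag]
  ring

lemma card_coprime_pairs_eq_two_mul_add_one {S : Finset ℕ} (hS : 1 ∈ S) :
    #{x ∈ S ×ˢ S | x.1.Coprime x.2} =
      2 * #{x ∈ S ×ˢ S | x.1 < x.2 ∧ x.1.Coprime x.2} + 1 := by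
  rw [card_filter_product_self_of_symmetric S Nat.Coprime]
  simp [Nat.coprime_self, Finset.filter_eq', hS]

end CoprimePairs

section NaturalDensity

open scoped ArithmeticFunction.Moebius Finset

open scoped Classical in
/-- The finite set `A ∩ [1, N]`, whose size enters the natural density of `A`; the element `0` is
never counted. -/
noncomputable def initialPart (A : Set ℕ) (N : ℕ) : Finset ℕ := {n ∈ Finset.Icc 1 N | n ∈ A}

/-- The set `A` of positive integers has natural density `δ`: the proportion of `[1, N]` lying in
`A` tends to `δ`. -/
def HasNaturalDensity (A : Set ℕ) (δ : ℝ) : Prop :=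
  Tendsto (fun N : ℕ => (#(initialPart A N) : ℝ) / N) atTop (𝓝 δ)

variable {A B : Set ℕ} {d n N : ℕ} {δ : ℝ}

lemma mem_initialPart : n ∈ initialPart A N ↔ (1 ≤ n ∧ n ≤ N) ∧ n ∈ A := by
  simp [initialPart]

lemma initialPart_subset_Icc (A : Set ℕ) (N : ℕ) : initialPart A N ⊆ Finset.Icc 1 N :=
  fun _ hn => Finset.mem_Icc.mpr (mem_initialPart.mp hn).1

lemma card_initialPart_le (A : Set ℕ) (N : ℕ) : #(initialPart A N) ≤ N := by
  simpa using Finset.card_le_card (initialPart_subset_Icc A N)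

lemma card_initialPart_add_card_initialPart_compl (A : Set ℕ) (N : ℕ) :
    #(initialPart A N) + #(initialPart Aᶜ N) = N := by
  classical
  have h_split := Finset.card_filter_add_card_filter_not (s := Finset.Icc 1 N) (fun n => n ∈ A)
  simpa [initialPart] using h_split

lemma filter_dvd_initialPart (A : Set ℕ) (d N : ℕ) :
    {n ∈ initialPart A N | d ∣ n} = initialPart {n ∈ A | d ∣ n} N := by
  ext n
  simp [mem_initialPart, and_assoc]

lemma card_initialPart_multiples (A : Set ℕ) (d N : ℕ) :
    #(initialPart {n ∈ A | d ∣ n} N) = #(initialPart {m | d * m ∈ A} (N / d)) := by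
  rcases d.eq_zero_or_pos with rfl | hd
  · have h_empty : initialPart {n ∈ A | 0 ∣ n} N = ∅ := by
      ext n
      simp only [mem_initialPart, Set.mem_ofPred_eq, zero_dvd_iff, Finset.notMem_empty]
      lia
    rw [h_empty, Nat.div_zero]
    simp [initialPart]
  · refine (Finset.card_nbij (d * ·) ?_ ?_ ?_).symm
    · intro m hm
      simp only [Finset.mem_coe, mem_initialPart, Set.mem_ofPred_eq] at hm ⊢
      exact ⟨⟨Nat.mul_pos hd hm.1.1, (Nat.mul_le_mul_left d hm.1.2).trans (Nat.mul_div_le N d)⟩,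
        hm.2, d.dvd_mul_right m⟩
    · exact fun _ _ _ _ h => Nat.eq_of_mul_eq_mul_left hd h
    · intro n hn
      obtain ⟨⟨hn_pos, hnN⟩, hnA, m, rfl⟩ := mem_initialPart.mp hn
      refine ⟨m, mem_initialPart.mpr ⟨⟨Nat.pos_of_mul_pos_left hn_pos, ?_⟩, hnA⟩, rfl⟩
      rwa [Nat.le_div_iff_mul_le hd, mul_comm]

lemma card_initialPart_multiples_div_le (A : Set ℕ) (d N : ℕ) :
    (#(initialPart {n ∈ A | d ∣ n} N) : ℝ) / N ≤ 1 / d := by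
  have h_card : (#(initialPart {n ∈ A | d ∣ n} N) : ℝ) ≤ N / d := by
    rw [card_initialPart_multiples]
    exact (Nat.cast_le.mpr (card_initialPart_le _ _)).trans Nat.cast_div_le
  refine div_le_of_le_mul₀ N.cast_nonneg (by positivity) ?_
  rwa [one_div_mul_eq_div]

lemma tendsto_natCast_div_div (hd : d ≠ 0) :
    Tendsto (fun N : ℕ => ((N / d : ℕ) : ℝ) / N) atTop (𝓝 (1 / d)) := by
  refine ((tendsto_nat_floor_mul_div_atTop (R := ℝ) (a := 1 / d) (by positivity)).comp
    tendsto_natCast_atTop_atTop).congr fun N => ?_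
  rw [Function.comp_apply, one_div_mul_eq_div, Nat.floor_div_eq_div]

lemma HasNaturalDensity.multiples (hd : d ≠ 0) (h : HasNaturalDensity {m | d * m ∈ A} δ) :
    HasNaturalDensity {n ∈ A | d ∣ n} (δ / d) := by
  rw [div_eq_mul_one_div]
  refine ((h.comp (Nat.tendsto_div_const_atTop hd)).mul (tendsto_natCast_div_div hd)).congr' ?_
  filter_upwards [eventually_ge_atTop d] with N hN
  have h_pos : ((N / d : ℕ) : ℝ) ≠ 0 := by
    exact_mod_cast (Nat.div_pos hN (Nat.pos_of_ne_zero hd)).ne'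
  rw [Function.comp_apply, card_initialPart_multiples, div_mul_div_cancel₀ h_pos]

lemma card_coprime_pairs_div_sq_eq_tsum (A B : Set ℕ) (N : ℕ) :
    (#{x ∈ initialPart A N ×ˢ initialPart B N | x.1.Coprime x.2} : ℝ) / N ^ 2 =
      ∑' d : ℕ, (μ d : ℝ) * (#(initialPart {n ∈ A | d ∣ n} N) / N *
        (#(initialPart {n ∈ B | d ∣ n} N) / N)) := by
  have h_count := congrArg (Int.cast : ℤ → ℝ)
    (card_coprime_pairs_eq_sum_moebius (initialPart_subset_Icc A N) (initialPart B N))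
  simp only [filter_dvd_initialPart] at h_count
  push_cast at h_count
  rw [h_count, Finset.sum_div, tsum_eq_sum]
  · refine Finset.sum_congr rfl fun d _ => ?_
    ring
  · intro d hd
    have h_div : N / d = 0 := by
      rw [Nat.div_eq_zero_iff]
      simp only [Finset.mem_Icc] at hd
      lia
    have h_card : #(initialPart {n ∈ A | d ∣ n} N) = 0 := by
      rw [card_initialPart_multiples, h_div]
      exact Nat.le_zero.mp (card_initialPart_le _ 0)
    simp [h_card]

theorem tendsto_card_coprime_pairs_div_sq {α β : ℕ → ℝ}
    (hA : ∀ d, Squarefree d → HasNaturalDensity {n ∈ A | d ∣ n} (α d))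
    (hB : ∀ d, Squarefree d → HasNaturalDensity {n ∈ B | d ∣ n} (β d)) :
    Tendsto (fun N : ℕ =>
        (#{x ∈ initialPart A N ×ˢ initialPart B N | x.1.Coprime x.2} : ℝ) / N ^ 2)
      atTop (𝓝 (∑' d, (μ d : ℝ) * (α d * β d))) := by
  simp_rw [card_coprime_pairs_div_sq_eq_tsum]
  refine tendsto_tsum_of_dominated_convergence (bound := fun d : ℕ => 1 / (d : ℝ) ^ 2)
    (Real.summable_one_div_nat_pow.mpr one_lt_two) (fun d => ?_) (.of_forall fun N d => ?_)
  · by_cases hd : Squarefree d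
    · exact ((hA d hd).mul (hB d hd)).const_mul _
    · simp [ArithmeticFunction.moebius_eq_zero_of_not_squarefree hd]
  · have h_moebius : |(μ d : ℝ)| ≤ 1 := by
      exact_mod_cast ArithmeticFunction.abs_moebius_le_one (n := d)
    rw [norm_mul, Real.norm_eq_abs, Real.norm_of_nonneg (by positivity)]
    calc _ ≤ 1 * (1 / (d : ℝ) * (1 / d)) := by
          refine mul_le_mul h_moebius (mul_le_mul ?_ ?_ (by positivity) (by positivity))
            (by positivity) zero_le_one <;> exact card_initialPart_multiples_div_le _ d N
      _ = 1 / (d : ℝ) ^ 2 := by ring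

end NaturalDensity

section MoebiusSums

open scoped ArithmeticFunction.Moebius

lemma hasSum_moebius_div_sq :
    HasSum (fun n : ℕ => (μ n : ℝ) / (n : ℝ) ^ 2) (6 / Real.pi ^ 2) := by
  have h_re : 1 < (2 : ℂ).re := by norm_num
  have h_value : LSeries (fun n => (μ n : ℂ)) 2 = ((6 / Real.pi ^ 2 : ℝ) : ℂ) := by
    have h_inv := ArithmeticFunction.LSeries_zeta_mul_Lseries_moebius h_re
    rw [ArithmeticFunction.LSeries_zeta_eq_riemannZeta h_re, riemannZeta_two] at h_inv
    rw [eq_inv_of_mul_eq_one_right h_inv, inv_div]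
    push_cast
    rfl
  have h_sum := (ArithmeticFunction.LSeriesSummable_moebius_iff.mpr h_re).LSeriesHasSum
  rw [LSeriesHasSum, h_value] at h_sum
  refine Complex.hasSum_ofReal.mp (h_sum.congr_fun fun n => ?_)
  rcases eq_or_ne n 0 with rfl | hn
  · simp
  · rw [LSeries.term_of_ne_zero hn, Complex.cpow_ofNat]
    push_cast
    rfl

lemma moebius_prime_mul {p n : ℕ} (hp : p.Prime) (hn : ¬ p ∣ n) : μ (p * n) = -μ n := by
  rw [ArithmeticFunction.isMultiplicative_moebius.map_mul_of_coprime
    ((Nat.Prime.coprime_iff_not_dvd hp).mpr hn), ArithmeticFunction.moebius_apply_prime hp,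
    neg_one_mul]

lemma moebius_prime_mul_prime_mul {p : ℕ} (hp : p.Prime) (n : ℕ) : μ (p * (p * n)) = 0 := by
  refine ArithmeticFunction.moebius_eq_zero_of_not_squarefree fun h => hp.not_isUnit (h p ?_)
  exact ⟨n, (mul_assoc p p n).symm⟩

lemma hasSum_moebius_div_sq_even_of_odd {s : ℝ}
    (h : HasSum (fun k : ℕ => (μ (2 * k + 1) : ℝ) / ((2 * k + 1 : ℕ) : ℝ) ^ 2) s) :
    HasSum (fun k : ℕ => (μ (2 * k) : ℝ) / ((2 * k : ℕ) : ℝ) ^ 2) (-(s / 4)) := by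
  rw [← zero_add (-(s / 4))]
  refine HasSum.even_add_odd ?_ ?_
  · simp [moebius_prime_mul_prime_mul Nat.prime_two, hasSum_zero]
  · refine (h.div_const 4).neg.congr_fun fun k => ?_
    rw [moebius_prime_mul Nat.prime_two (by lia), Nat.cast_mul]
    push_cast
    rw [mul_pow, neg_div, div_div]
    ring

lemma hasSum_moebius_div_sq_odd :
    HasSum (fun k : ℕ => (μ (2 * k + 1) : ℝ) / ((2 * k + 1 : ℕ) : ℝ) ^ 2) (8 / Real.pi ^ 2) := by
  obtain ⟨s, hs⟩ : Summable fun k : ℕ => (μ (2 * k + 1) : ℝ) / ((2 * k + 1 : ℕ) : ℝ) ^ 2 :=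
    hasSum_moebius_div_sq.summable.comp_injective (i := fun k : ℕ => 2 * k + 1)
      fun _ _ h => by simpa using h
  have h_total : 6 / Real.pi ^ 2 = -(s / 4) + s :=
    hasSum_moebius_div_sq.unique (HasSum.even_add_odd (hasSum_moebius_div_sq_even_of_odd hs) hs)
  have h_value : s = 8 / Real.pi ^ 2 := by linear_combination (-4 / 3) * h_total
  rwa [← h_value]

lemma hasSum_moebius_div_sq_mul_ite_odd (a b : ℝ) :
    HasSum (fun n : ℕ => (μ n : ℝ) / (n : ℝ) ^ 2 * if Odd n then a else b)
      ((8 * a - 2 * b) / Real.pi ^ 2) := by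
  have h_even := (hasSum_moebius_div_sq_even_of_odd hasSum_moebius_div_sq_odd).mul_right b
  have h_odd := hasSum_moebius_div_sq_odd.mul_right a
  have h_value : (8 * a - 2 * b) / Real.pi ^ 2 =
      -(8 / Real.pi ^ 2 / 4) * b + 8 / Real.pi ^ 2 * a := by ring
  rw [h_value]
  refine HasSum.even_add_odd (h_even.congr_fun fun k => ?_) (h_odd.congr_fun fun k => ?_)
  · rw [if_neg (by simp)]
  · rw [if_pos (odd_two_mul_add_one k)]

end MoebiusSums

section HalvingRecursion

lemma abs_sub_two_thirds_mul_le_log_of_add_half_eq {f : ℕ → ℝ}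
    (hf : ∀ N : ℕ, f N + f (N / 2) = N) (N : ℕ) :
    |f N - 2 / 3 * N| ≤ Nat.log 2 N + 1 := by
  induction N using Nat.strong_induction_on with
  | _ N ih =>
    have h_rec : f N - 2 / 3 * N = (N % 2 : ℕ) / 3 - (f (N / 2) - 2 / 3 * (N / 2 : ℕ)) := by
      have h_div : (N : ℝ) = 2 * (N / 2 : ℕ) + (N % 2 : ℕ) := by
        exact_mod_cast (Nat.div_add_mod N 2).symm
      linear_combination hf N + (1 / 3) * h_div
    have h_mod : |((N % 2 : ℕ) : ℝ) / 3| ≤ 1 := by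
      rw [abs_of_nonneg (by positivity)]
      have h_le : ((N % 2 : ℕ) : ℝ) ≤ 1 := by exact_mod_cast Nat.le_of_lt_succ (N.mod_lt two_pos)
      linarith only [h_le]
    rcases lt_or_ge N 2 with hN | hN
    · have h_zero : f 0 = 0 := by simpa using hf 0
      have h_half : N / 2 = 0 := Nat.div_eq_of_lt hN
      rw [h_rec, h_half, h_zero]
      simpa using h_mod.trans (le_add_of_nonneg_left (Nat.cast_nonneg (Nat.log 2 N)))
    · calc |f N - 2 / 3 * N|
          ≤ |((N % 2 : ℕ) : ℝ) / 3| + |f (N / 2) - 2 / 3 * (N / 2 : ℕ)| := by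
            rw [h_rec]
            exact abs_sub _ _
        _ ≤ 1 + (Nat.log 2 (N / 2) + 1) :=
            add_le_add h_mod (ih _ (Nat.div_lt_self (by lia) one_lt_two))
        _ = Nat.log 2 N + 1 := by
            rw [Nat.log_of_one_lt_of_le one_lt_two hN]
            push_cast
            ring

lemma tendsto_natLog_add_one_div (b : ℕ) :
    Tendsto (fun N : ℕ => (Nat.log b N + 1 : ℝ) / N) atTop (𝓝 0) := by
  have h_logb : Tendsto (fun N : ℕ => Real.logb b N / N) atTop (𝓝 0) := by
    simpa [Function.comp_def] using
      (Real.tendsto_pow_logb_div_mul_add_atTop (b := b) 1 0 1 one_ne_zero).comp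
        tendsto_natCast_atTop_atTop
  have h_bound : Tendsto (fun N : ℕ => Real.logb b N / N + 1 / N) atTop (𝓝 0) := by
    simpa using h_logb.add tendsto_one_div_atTop_nhds_zero_nat
  refine squeeze_zero (fun N => by positivity) (fun N => ?_) h_bound
  rw [← add_div]
  gcongr
  exact Real.natLog_le_logb N b

lemma tendsto_div_of_add_half_eq {f : ℕ → ℝ} (hf : ∀ N : ℕ, f N + f (N / 2) = N) :
    Tendsto (fun N : ℕ => f N / N) atTop (𝓝 (2 / 3)) := by
  refine tendsto_iff_norm_sub_tendsto_zero.mpr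
    (squeeze_zero' (.of_forall fun _ => norm_nonneg _) ?_ (tendsto_natLog_add_one_div 2))
  filter_upwards [eventually_gt_atTop 0] with N hN
  have hN_pos : (0 : ℝ) < N := by exact_mod_cast hN
  rw [Real.norm_eq_abs, div_sub' hN_pos.ne', abs_div, abs_of_pos hN_pos, mul_comm (N : ℝ)]
  gcongr
  exact abs_sub_two_thirds_mul_le_log_of_add_half_eq hf N

end HalvingRecursion

section GammaDensity

open scoped Finset

variable {d m n : ℕ}

lemma mem_Gamma_iff_odd_padicValNat (n : ℕ) : n ∈ Gamma ↔ n ≠ 0 ∧ Odd (padicValNat 2 n) := by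
  constructor
  · rintro ⟨k, l, hk, hl, rfl⟩
    have h_ne : 2 * k - 1 ≠ 0 := by lia
    refine ⟨by positivity, ?_⟩
    rw [padicValNat.mul h_ne (by positivity), padicValNat.prime_pow,
      padicValNat.eq_zero_of_not_dvd (by lia)]
    exact ⟨l - 1, by lia⟩
  · rintro ⟨hn, h_odd⟩
    obtain ⟨e, m, ⟨k, rfl⟩, rfl⟩ := Nat.exists_eq_two_pow_mul_odd hn
    obtain ⟨l, rfl⟩ : Odd e := by
      rwa [padicValNat.mul (by positivity) (by positivity), padicValNat.prime_pow,
        padicValNat.eq_zero_of_not_dvd (by lia), add_zero] at h_odd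
    exact ⟨k + 1, l + 1, k.succ_pos, l.succ_pos, mul_comm _ _⟩

lemma two_mul_mem_Gamma_iff (hm : m ≠ 0) : 2 * m ∈ Gamma ↔ m ∉ Gamma := by
  rw [mem_Gamma_iff_odd_padicValNat, mem_Gamma_iff_odd_padicValNat,
    padicValNat.mul two_ne_zero hm, padicValNat.self one_lt_two]
  simp [hm, Nat.odd_add, add_comm 1]

lemma four_mul_mem_Gamma_iff : 4 * m ∈ Gamma ↔ m ∈ Gamma := by
  rcases eq_or_ne m 0 with rfl | hm
  · rfl
  · rw [show 4 * m = 2 * (2 * m) by ring, two_mul_mem_Gamma_iff (by positivity),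
      two_mul_mem_Gamma_iff hm, not_not]

lemma odd_mul_mem_Gamma_iff (hd : Odd d) : d * m ∈ Gamma ↔ m ∈ Gamma := by
  rcases eq_or_ne m 0 with rfl | hm
  · rfl
  · have h_val : padicValNat 2 d = 0 := padicValNat.eq_zero_of_not_dvd hd.not_two_dvd_nat
    rw [mem_Gamma_iff_odd_padicValNat, mem_Gamma_iff_odd_padicValNat,
      padicValNat.mul hd.pos.ne' hm, h_val, zero_add]
    simp [hd.pos.ne', hm]

lemma two_dvd_of_mem_Gamma (hn : n ∈ Gamma) : 2 ∣ n := by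
  by_contra h
  simpa [padicValNat.eq_zero_of_not_dvd h] using ((mem_Gamma_iff_odd_padicValNat n).mp hn).2

lemma four_dvd_of_notMem_Gamma (hn : n ∉ Gamma) (h_even : 2 ∣ n) : 4 ∣ n := by
  obtain ⟨m, rfl⟩ := h_even
  suffices 2 ∣ m from mul_dvd_mul_left 2 this
  by_contra hm
  exact hn ((two_mul_mem_Gamma_iff (by lia)).mpr fun h => hm (two_dvd_of_mem_Gamma h))

lemma sep_two_mul_dvd_compl_Gamma (hd : Odd d) :
    {n ∈ Gammaᶜ | 2 * d ∣ n} = {n ∈ Gammaᶜ | 4 * d ∣ n} := by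
  refine Set.ext fun n => and_congr_right fun hn => ⟨fun h => ?_, fun h => ?_⟩
  · have h_coprime : Nat.Coprime 4 d := (Nat.coprime_two_left.mpr hd).pow_left 2
    exact h_coprime.mul_dvd_of_dvd_of_dvd
      (four_dvd_of_notMem_Gamma hn (dvd_of_mul_right_dvd h)) (dvd_of_mul_left_dvd h)
  · exact (mul_dvd_mul_right (by norm_num) d).trans h

lemma card_initialPart_Gamma (N : ℕ) :
    #(initialPart Gamma N) = #(initialPart Gammaᶜ (N / 2)) := by
  have h_even : {n ∈ Gamma | 2 ∣ n} = Gamma :=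
    Set.sep_eq_self_iff_mem_true.mpr fun _ => two_dvd_of_mem_Gamma
  have h_halves : initialPart {m | 2 * m ∈ Gamma} (N / 2) = initialPart Gammaᶜ (N / 2) := by
    ext m
    simp only [mem_initialPart, Set.mem_ofPred_eq, Set.mem_compl_iff]
    exact and_congr_right fun hm => two_mul_mem_Gamma_iff (Nat.one_le_iff_ne_zero.mp hm.1)
  rw [← h_halves, ← card_initialPart_multiples, h_even]

lemma hasNaturalDensity_compl_Gamma : HasNaturalDensity Gammaᶜ (2 / 3) := by
  refine tendsto_div_of_add_half_eq fun N => ?_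
  rw [← card_initialPart_Gamma, add_comm]
  exact_mod_cast card_initialPart_add_card_initialPart_compl Gamma N

lemma hasNaturalDensity_compl_Gamma_multiples (hd : Squarefree d) :
    HasNaturalDensity {n ∈ Gammaᶜ | d ∣ n} ((if Odd d then 2 / 3 else 1 / 3) / d) := by
  split_ifs with h_odd
  · refine .multiples h_odd.pos.ne' ?_
    simp only [Set.mem_compl_iff, odd_mul_mem_Gamma_iff h_odd]
    exact hasNaturalDensity_compl_Gamma
  · obtain ⟨r, rfl⟩ := (Nat.not_odd_iff_even.mp h_odd).two_dvd
    have hr : Odd r := Nat.coprime_two_left.mp (Nat.coprime_of_squarefree_mul hd)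
    have h_value : (1 / 3 : ℝ) / (2 * r : ℕ) = 2 / 3 / (4 * r : ℕ) := by
      push_cast
      ring
    rw [h_value, sep_two_mul_dvd_compl_Gamma hr]
    refine .multiples (by have := hr.pos; positivity) ?_
    simp only [Set.mem_compl_iff, mul_assoc, four_mul_mem_Gamma_iff, odd_mul_mem_Gamma_iff hr]
    exact hasNaturalDensity_compl_Gamma

end GammaDensity

section PairCount

open scoped ArithmeticFunction.Moebius Finset

lemma W_inter_box_eq (N : ℕ) :
    W ∩ {pq : ℕ × ℕ | pq.1 ∈ Set.Icc 1 N ∧ pq.2 ∈ Set.Icc 1 N} =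
      ({x ∈ initialPart Gammaᶜ N ×ˢ initialPart Gammaᶜ N | x.1 < x.2 ∧ x.1.Coprime x.2} :
        Finset (ℕ × ℕ)) := by
  ext ⟨p, q⟩
  simp only [W, mem_initialPart, Set.mem_inter_iff, Set.mem_ofPred_eq, Set.mem_Icc,
    Set.mem_compl_iff, Finset.coe_filter, Finset.mem_product]
  tauto

lemma card_coprime_pairs_compl_Gamma {N : ℕ} (hN : 1 ≤ N) :
    #{x ∈ initialPart Gammaᶜ N ×ˢ initialPart Gammaᶜ N | x.1.Coprime x.2} =
      2 * (W ∩ {pq : ℕ × ℕ | pq.1 ∈ Set.Icc 1 N ∧ pq.2 ∈ Set.Icc 1 N}).ncard + 1 := by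
  have h_one : 1 ∈ initialPart Gammaᶜ N :=
    mem_initialPart.mpr ⟨⟨le_rfl, hN⟩, fun h => by simpa using two_dvd_of_mem_Gamma h⟩
  rw [W_inter_box_eq, Set.ncard_coe_finset, card_coprime_pairs_eq_two_mul_add_one h_one]

lemma tendsto_card_coprime_pairs_compl_Gamma :
    Tendsto (fun N : ℕ =>
        (#{x ∈ initialPart Gammaᶜ N ×ˢ initialPart Gammaᶜ N | x.1.Coprime x.2} : ℝ) / N ^ 2)
      atTop (𝓝 (10 / (3 * Real.pi ^ 2))) := by
  have h_density (d : ℕ) := hasNaturalDensity_compl_Gamma_multiples (d := d)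
  have h_value : ∑' d : ℕ, (μ d : ℝ) *
      ((if Odd d then 2 / 3 else 1 / 3) / d * ((if Odd d then 2 / 3 else 1 / 3) / d)) =
      10 / (3 * Real.pi ^ 2) := by
    have h_sum := (hasSum_moebius_div_sq_mul_ite_odd (4 / 9) (1 / 9)).tsum_eq
    calc _ = ∑' d : ℕ, (μ d : ℝ) / (d : ℝ) ^ 2 *
          (if Odd d then 4 / 9 else 1 / 9) := by
          refine tsum_congr fun d => ?_
          split_ifs <;> ring
      _ = 10 / (3 * Real.pi ^ 2) := by
          rw [h_sum]
          ring
  rw [← h_value]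
  exact tendsto_card_coprime_pairs_div_sq h_density h_density

end PairCount

theorem density_W :
    Tendsto (fun N : ℕ =>
        ((W ∩ {pq : ℕ × ℕ | pq.1 ∈ Set.Icc 1 N ∧ pq.2 ∈ Set.Icc 1 N}).ncard : ℝ)
          / (N : ℝ)^2)
      atTop (𝓝 (5 / (3 * Real.pi^2))) := by
  have h_diag : Tendsto (fun N : ℕ => 1 / (N : ℝ) ^ 2) atTop (𝓝 0) := by
    simpa using (tendsto_one_div_atTop_nhds_zero_nat (𝕜 := ℝ)).pow 2
  have h_half := (tendsto_card_coprime_pairs_compl_Gamma.sub h_diag).div_const 2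
  have h_value : (10 / (3 * Real.pi ^ 2) - 0) / 2 = 5 / (3 * Real.pi ^ 2) := by ring
  rw [h_value] at h_half
  refine h_half.congr' ?_
  filter_upwards [eventually_ge_atTop 1] with N hN
  rw [card_coprime_pairs_compl_Gamma hN]
  push_cast
  ring
end

section
/- If t = p/q ∈ (0,1) with p, q coprime positive integers, p < q, and both p ∉ Γ and q ∉ Γ, then the Hausdorff dimension of C_t is strictly less than 1. -/
open Filter Topology

/-!
Write `e(y) = exp(2πiy)`. Up to the factor `3 / q`, the set `C_{p/q}` consists of the base-4
expansions with digits `0, p, q, p + q`, whose exponential sum is `(1 + e(px))(1 + e(qx))`. The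
exponential sum `F_n` of the integers written by the `4^n` words of length `n` is a product of
dilates of this one. For `p, q ∉ Γ` no factor vanishes at `x = 4^{-j}`, `j ≥ 1`, and the factors
tend to `4` geometrically fast, so `|F_n(4^{-m})| ≥ c 4^n` for all `m ≤ n` with a uniform `c > 0`.

If distinct words always wrote distinct integers, then, these integers being `O(4^n)`, only
boundedly many of them could agree modulo `4^n`. Parseval on `ℤ/4^n` would give
`∑_k |F_n(k/4^n)|² = O(16^n)`, whereas the frequencies `k = 1, 4, …, 4^{n-1}` alone contribute
`n c² 16^n`: a discrete form of the Riemann–Lebesgue lemma. So for some `n` two words write the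
same integer, the set is covered by fewer than `4^n` copies of itself scaled by `4^{-n}`, and its
dimension is less than `1`.
-/

open scoped ENNReal NNReal FourierTransform

section SelfSimilarCovers

variable {X κ : Type*} [EMetricSpace X] {f : κ → X → X} {r : ℝ≥0} {C : Set X}

lemma exists_cover_ediam_le_pow_mul (hf : ∀ e, LipschitzWith r (f e))
    (hC : C ⊆ ⋃ e, f e '' C) (k : ℕ) :
    ∃ t : (Fin k → κ) → Set X, C ⊆ ⋃ w, t w ∧
      ∀ w, Metric.ediam (t w) ≤ (r : ℝ≥0∞) ^ k * Metric.ediam C := by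
  induction k with
  | zero => exact ⟨fun _ ↦ C, Set.subset_iUnion (fun _ : Fin 0 → κ ↦ C) ![], by simp⟩
  | succ k ih =>
    obtain ⟨t, hCt, ht⟩ := ih
    refine ⟨fun w ↦ f (w 0) '' t (Fin.tail w), fun x hx ↦ ?_, fun w ↦ ?_⟩
    · obtain ⟨e, y, hy, rfl⟩ := Set.mem_iUnion.1 (hC hx)
      obtain ⟨w, hw⟩ := Set.mem_iUnion.1 (hCt hy)
      exact Set.mem_iUnion.2 ⟨Fin.cons e w, y, by simpa using hw, by simp⟩
    · calc Metric.ediam (f (w 0) '' t (Fin.tail w))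
          ≤ r * Metric.ediam (t (Fin.tail w)) := (hf (w 0)).ediam_image_le _
        _ ≤ r * (r ^ k * Metric.ediam C) := by gcongr; exact ht _
        _ = r ^ (k + 1) * Metric.ediam C := by rw [pow_succ', mul_assoc]

variable [Fintype κ]

lemma hausdorffMeasure_le_ediam_rpow [MeasurableSpace X] [BorelSpace X]
    (hf : ∀ e, LipschitzWith r (f e)) (hr : r < 1) (hC : C ⊆ ⋃ e, f e '' C)
    (hCfin : Metric.ediam C ≠ ∞) {s : ℝ≥0} (hs : Fintype.card κ * r ^ (s : ℝ) ≤ 1) :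
    MeasureTheory.Measure.hausdorffMeasure s C ≤ Metric.ediam C ^ (s : ℝ) := by
  choose t hCt ht using exists_cover_ediam_le_pow_mul hf hC
  have mesh_tendsto : Tendsto (fun k : ℕ ↦ (r : ℝ≥0∞) ^ k * Metric.ediam C) atTop (𝓝 0) := by
    simpa using ENNReal.Tendsto.mul_const
      (ENNReal.tendsto_pow_atTop_nhds_zero_of_lt_one (ENNReal.coe_lt_one_iff.2 hr)) (.inr hCfin)
  refine (MeasureTheory.Measure.hausdorffMeasure_le_liminf_sum _ C _ mesh_tendsto t
    (.of_forall ht) (.of_forall hCt)).trans (liminf_le_of_frequently_le' (.of_forall fun k ↦ ?_))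
  have ratio_le : (Fintype.card κ : ℝ≥0∞) * (r : ℝ≥0∞) ^ (s : ℝ) ≤ 1 := by
    rw [← ENNReal.coe_rpow_of_nonneg _ s.coe_nonneg]
    exact_mod_cast hs
  calc ∑ w, Metric.ediam (t k w) ^ (s : ℝ)
      ≤ ∑ _w : Fin k → κ, ((r : ℝ≥0∞) ^ k * Metric.ediam C) ^ (s : ℝ) := by
        gcongr with w
        exact ht k w
    _ = (Fintype.card κ * (r : ℝ≥0∞) ^ (s : ℝ)) ^ k * Metric.ediam C ^ (s : ℝ) := by
        rw [ENNReal.mul_rpow_of_nonneg _ _ s.coe_nonneg, ← ENNReal.rpow_natCast_mul,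
          mul_comm (k : ℝ), ENNReal.rpow_mul_natCast, mul_pow]
        simp [mul_assoc]
    _ ≤ Metric.ediam C ^ (s : ℝ) := mul_le_of_le_one_left' (pow_le_one' ratio_le k)

theorem dimH_lt_of_subset_iUnion_image (hf : ∀ e, LipschitzWith r (f e)) (hr : r < 1)
    (hC : C ⊆ ⋃ e, f e '' C) (hCfin : Metric.ediam C ≠ ∞) {d : ℝ≥0} (hd : 0 < d)
    (hcard : Fintype.card κ * r ^ (d : ℝ) < 1) : dimH C < d := by
  have hcont : ContinuousAt (fun s : ℝ≥0 ↦ Fintype.card κ * r ^ (s : ℝ)) d :=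
    continuousAt_const.mul (ContinuousAt.comp (f := fun s : ℝ≥0 ↦ (r, (s : ℝ)))
      (NNReal.continuousAt_rpow (.inr (NNReal.coe_pos.2 hd))) (by fun_prop))
  obtain ⟨s, hs, hsd⟩ : ∃ s : ℝ≥0, Fintype.card κ * r ^ (s : ℝ) < 1 ∧ s < d := by
    have : (𝓝[<] d).NeBot := nhdsLT_neBot_of_exists_lt ⟨0, hd⟩
    exact (((hcont.eventually_lt_const hcard).filter_mono nhdsWithin_le_nhds).and
      (eventually_mem_nhdsWithin (s := Set.Iio d))).exists
  borelize X
  have hmeas := hausdorffMeasure_le_ediam_rpow hf hr hC hCfin hs.le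
  exact (dimH_le_of_hausdorffMeasure_ne_top (ne_top_of_le_ne_top
    (ENNReal.rpow_ne_top_of_nonneg s.coe_nonneg hCfin) hmeas)).trans_lt (by exact_mod_cast hsd)

end SelfSimilarCovers

lemma exists_pos_forall_le_norm_prod_range {𝕜 : Type*} [NormedField 𝕜] [CompleteSpace 𝕜]
    {g : ℕ → 𝕜} (hg : ∀ j, g j ≠ 0) (hsum : Summable fun j ↦ ‖g j - 1‖) :
    ∃ c : ℝ, 0 < c ∧ ∀ m, c ≤ ‖∏ j ∈ Finset.range m, g j‖ := by
  have hne : ∏' j, g j ≠ 0 := by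
    simpa using tprod_one_add_ne_zero_of_summable (f := fun j ↦ g j - 1) (by simpa using hg) hsum
  have hlim : Tendsto (fun m ↦ ∏ j ∈ Finset.range m, g j) atTop (𝓝 (∏' j, g j)) := by
    simpa using (multipliable_one_add_of_summable hsum).hasProd.tendsto_prod_nat
  obtain ⟨B, hB⟩ := (hlim.inv₀ hne).norm.bddAbove_range
  have hinv (m : ℕ) : ‖∏ j ∈ Finset.range m, g j‖⁻¹ ≤ B := by
    simpa only [norm_inv] using hB ⟨m, rfl⟩
  have hB_pos : 0 < B := zero_lt_one.trans_le (by simpa using hinv 0)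
  exact ⟨B⁻¹, inv_pos.2 hB_pos, fun m ↦ inv_le_of_inv_le₀
    (norm_pos_iff.2 (Finset.prod_ne_zero_iff.2 fun j _ ↦ hg j)) (hinv m)⟩

lemma hasSum_const_div_pow_succ {b : ℝ} (hb : 1 < b) (K : ℝ) :
    HasSum (fun i : ℕ ↦ K / b ^ (i + 1)) (K / (b - 1)) := by
  have hb0 : b ≠ 0 := by positivity
  have hb1 : b - 1 ≠ 0 := by linarith
  have hgeom := (hasSum_geometric_of_lt_one (inv_nonneg.2 (zero_le_one.trans hb.le))
    (inv_lt_one_of_one_lt₀ hb)).mul_left (K / b)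
  have hvalue : K / b * (1 - b⁻¹)⁻¹ = K / (b - 1) := by field_simp
  rw [hvalue] at hgeom
  simpa only [inv_pow, ← div_eq_mul_inv, div_div, ← pow_succ'] using hgeom

section ExponentialSums

variable {W : Type*} [Fintype W]

/-- The exponential sum `∑_w e(v_w x)`, where `e(y) = exp(2πiy)`, attached to a finite family of
frequencies `v`; up to normalisation, the characteristic function of the family. -/
noncomputable def expSum (v : W → ℕ) (x : ℝ) : ℂ := ∑ w, (𝐞 (v w * x) : ℂ)

lemma fourierChar_natCast (n : ℕ) : (𝐞 (n : ℝ) : ℂ) = 1 := by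
  rw [Real.fourierChar_apply, Complex.exp_eq_one_iff]
  exact ⟨n, by push_cast; ring⟩

lemma norm_fourierChar_sub_one_le (x : ℝ) : ‖(𝐞 x : ℂ) - 1‖ ≤ 2 * Real.pi * |x| := by
  have h := @Real.norm_exp_I_mul_ofReal_sub_one_le (2 * Real.pi * x)
  rwa [mul_comm Complex.I, Real.norm_eq_abs, abs_mul, abs_of_pos Real.two_pi_pos] at h

lemma expSum_natCast (v : W → ℕ) (n : ℕ) : expSum v n = Fintype.card W := by
  simp [expSum, ← Nat.cast_mul, fourierChar_natCast]

lemma norm_expSum_sub_card_le (v : W → ℕ) (x : ℝ) :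
    ‖expSum v x - Fintype.card W‖ ≤ 2 * Real.pi * (∑ w, v w : ℕ) * |x| := by
  calc ‖expSum v x - Fintype.card W‖ = ‖∑ w, ((𝐞 (v w * x) : ℂ) - 1)‖ := by simp [expSum]
    _ ≤ ∑ w, ‖(𝐞 (v w * x) : ℂ) - 1‖ := norm_sum_le _ _
    _ ≤ ∑ w, 2 * Real.pi * |v w * x| := by gcongr; exact norm_fourierChar_sub_one_le _
    _ = 2 * Real.pi * (∑ w, v w : ℕ) * |x| := by
        simp [abs_mul, Finset.mul_sum, Finset.sum_mul, mul_assoc]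

lemma summable_norm_expSum_div_card_sub_one [Nonempty W] (v : W → ℕ) {b : ℕ} (hb : 1 < b) :
    Summable fun j : ℕ ↦ ‖expSum v (1 / b ^ (j + 1)) / Fintype.card W - 1‖ := by
  have hcard : (Fintype.card W : ℂ) ≠ 0 := Nat.cast_ne_zero.2 Fintype.card_ne_zero
  refine .of_nonneg_of_le (fun _ ↦ norm_nonneg _) (fun j ↦ ?_)
    (hasSum_const_div_pow_succ (b := b) (by exact_mod_cast hb)
      (2 * Real.pi * (∑ w, v w : ℕ) / Fintype.card W)).summable
  rw [div_sub_one hcard, norm_div, Complex.norm_natCast, div_right_comm]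
  gcongr
  simpa [div_eq_mul_inv] using norm_expSum_sub_card_le v (1 / b ^ (j + 1))

lemma fourierChar_sum {α : Type*} (s : Finset α) (x : α → ℝ) :
    (𝐞 (∑ i ∈ s, x i) : ℂ) = ∏ i ∈ s, (𝐞 (x i) : ℂ) := by
  simp only [Real.fourierChar_apply, Finset.mul_sum, Complex.ofReal_sum, Finset.sum_mul,
    Complex.exp_sum]

lemma sum_norm_sq_sum_addChar {R : Type*} [CommRing R] [Fintype R] [DecidableEq R]
    {ψ : AddChar R ℂ} (hψ : ψ.IsPrimitive) (v : W → R) :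
    ∑ k, ‖∑ w, ψ (k * v w)‖ ^ 2 = Fintype.card R * Finset.card {z : W × W | v z.1 = v z.2} := by
  have norm_sq_eq (k : R) :
      ((‖∑ w, ψ (k * v w)‖ ^ 2 : ℝ) : ℂ) = ∑ z : W × W, ψ (k * (v z.1 - v z.2)) := by
    rw [Complex.ofReal_pow, ← Complex.mul_conj', map_sum, Finset.sum_mul_sum,
      Fintype.sum_prod_type]
    simp only [← AddChar.map_neg_eq_conj, ← AddChar.map_add_eq_mul, sub_eq_add_neg, mul_add,
      mul_neg]
  apply Complex.ofReal_injective
  rw [Complex.ofReal_sum]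
  simp_rw [norm_sq_eq]
  rw [Finset.sum_comm]
  simp [AddChar.sum_mulShift _ hψ, sub_eq_zero, Finset.sum_ite, mul_comm]

lemma card_pairs_modEq_le {v : W → ℕ} (hv : Function.Injective v) {Q M : ℕ}
    (hlt : ∀ w, v w < Q * M) :
    Finset.card {z : W × W | v z.1 ≡ v z.2 [MOD Q]} ≤ Fintype.card W * M := by
  rw [← Finset.card_univ, ← Finset.card_range M, ← Finset.card_product]
  refine Finset.card_le_card_of_injOn (fun z ↦ (z.1, v z.2 / Q)) (fun z _ ↦ ?_) ?_
  · simpa using Nat.div_lt_of_lt_mul (hlt z.2)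
  · rintro ⟨w, a⟩ ha ⟨w', b⟩ hb hab
    obtain ⟨rfl, hdiv⟩ := Prod.mk.inj hab
    have hmod : v a ≡ v b [MOD Q] := by
      simp only [Finset.coe_filter, Finset.mem_univ, true_and, Set.mem_ofPred_eq] at ha hb
      exact ha.symm.trans hb
    have hval : v a = v b := by rw [← Nat.div_add_mod (v a) Q, hdiv, hmod, Nat.div_add_mod]
    rw [hv hval]

lemma stdAddChar_natCast_mul_natCast (Q k n : ℕ) [NeZero Q] :
    ZMod.stdAddChar ((k : ZMod Q) * (n : ZMod Q)) = (𝐞 (n * (k / Q)) : ℂ) := by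
  have h := ZMod.stdAddChar_coe (N := Q) (k * n)
  push_cast at h
  rw [h, Real.fourierChar_apply]
  congr 1
  push_cast
  ring

lemma sum_norm_sq_expSum_le {v : W → ℕ} (hv : Function.Injective v) {Q M : ℕ} [NeZero Q]
    (hlt : ∀ w, v w < Q * M) {S : Finset ℕ} (hS : ∀ k ∈ S, k < Q) :
    ∑ k ∈ S, ‖expSum v (k / Q)‖ ^ 2 ≤ Q * (Fintype.card W * M) := by
  have cast_inj : Set.InjOn (Nat.cast : ℕ → ZMod Q) S := fun a ha b hb hab ↦ by
    rwa [ZMod.natCast_eq_natCast_iff', Nat.mod_eq_of_lt (hS a ha), Nat.mod_eq_of_lt (hS b hb)]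
      at hab
  calc ∑ k ∈ S, ‖expSum v (k / Q)‖ ^ 2
      = ∑ k ∈ S.image (Nat.cast : ℕ → ZMod Q), ‖∑ w, ZMod.stdAddChar (k * (v w : ZMod Q))‖ ^ 2 := by
        rw [Finset.sum_image cast_inj]
        simp only [expSum, stdAddChar_natCast_mul_natCast]
    _ ≤ ∑ k : ZMod Q, ‖∑ w, ZMod.stdAddChar (k * (v w : ZMod Q))‖ ^ 2 :=
        Finset.sum_le_sum_of_subset_of_nonneg (Finset.subset_univ _) fun _ _ _ ↦ by positivity
    _ = Q * Finset.card {z : W × W | v z.1 ≡ v z.2 [MOD Q]} := by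
        rw [sum_norm_sq_sum_addChar (ZMod.isPrimitive_stdAddChar Q), ZMod.card]
        simp only [ZMod.natCast_eq_natCast_iff]
    _ ≤ Q * (Fintype.card W * M) := by
        gcongr
        exact_mod_cast card_pairs_modEq_le hv hlt

end ExponentialSums

lemma card_range_lt_card_of_not_injective {α β : Type*} [Fintype α] {f : α → β}
    [Fintype (Set.range f)] (hf : ¬ Function.Injective f) :
    Fintype.card (Set.range f) < Fintype.card α :=
  Fintype.card_lt_of_surjective_not_injective _ Set.rangeFactorization_surjective
    (mt Set.rangeFactorization_injective.1 hf)

section DigitSystems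

variable {ι : Type*} (b : ℕ) (D : ι → ℕ)

/-- The integer `∑_{i<n} D(w_i) b^{n-1-i}` written in base `b` by the word `w`, most significant
letter first, where the letter `a` stands for the digit `D a`. The digits may exceed `b`. -/
def wordValue (n : ℕ) (w : Fin n → ι) : ℕ := ∑ i, b ^ (i.rev : ℕ) * D (w i)

/-- The real number `∑_{i≥0} D(w_i) b^{-(i+1)}` with base-`b` expansion `w`, where the letter `a`
stands for the digit `D a`. -/
noncomputable def digitExpansion (w : ℕ → ι) : ℝ := ∑' i, (D (w i) : ℝ) / b ^ (i + 1)

variable {b D}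

lemma wordValue_lt {K : ℕ} (hb : 1 < b) (hD : ∀ a, D a ≤ K) (n : ℕ) (w : Fin n → ι) :
    wordValue b D n w < b ^ n * (K + 1) := by
  have hgeom : ∑ i : Fin n, b ^ (i.rev : ℕ) < b ^ n := by
    rw [show ∑ i : Fin n, b ^ (i.rev : ℕ) = ∑ i : Fin n, b ^ (i : ℕ) from
      Equiv.sum_comp Fin.revPerm fun i : Fin n ↦ b ^ (i : ℕ), Fin.sum_univ_eq_sum_range (b ^ ·)]
    exact Nat.geomSum_lt hb fun i hi ↦ Finset.mem_range.1 hi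
  calc wordValue b D n w ≤ ∑ i : Fin n, b ^ (i.rev : ℕ) * K :=
        Finset.sum_le_sum fun i _ ↦ Nat.mul_le_mul_left _ (hD _)
    _ = (∑ i : Fin n, b ^ (i.rev : ℕ)) * K := by rw [Finset.sum_mul]
    _ < b ^ n * (K + 1) := Nat.mul_lt_mul_of_lt_of_le hgeom K.le_succ K.succ_pos

lemma wordValue_div_pow (hb : b ≠ 0) (n : ℕ) (w : Fin n → ι) :
    (wordValue b D n w : ℝ) / b ^ n = ∑ i : Fin n, (D (w i) : ℝ) / b ^ (i + 1 : ℕ) := by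
  rw [wordValue, Nat.cast_sum, Finset.sum_div]
  refine Finset.sum_congr rfl fun i _ ↦ ?_
  have hpow : (b : ℝ) ^ n = b ^ (i.rev : ℕ) * b ^ (i + 1 : ℕ) := by
    rw [← pow_add, Fin.val_rev, Nat.sub_add_cancel i.isLt]
  rw [hpow]
  push_cast
  field_simp

section Overlap

variable [Fintype ι]

lemma expSum_wordValue_div_pow (hb : b ≠ 0) (n : ℕ) (x : ℝ) :
    expSum (wordValue b D n) (x / b ^ n) =
      ∏ i ∈ Finset.range n, expSum D (x / b ^ (i + 1)) := by
  rw [← Fin.prod_univ_eq_prod_range fun i ↦ expSum D (x / b ^ (i + 1))]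
  simp only [expSum, Fintype.prod_sum]
  refine Finset.sum_congr rfl fun w _ ↦ ?_
  have hexponent : wordValue b D n w * (x / b ^ n) =
      ∑ i : Fin n, D (w i) * (x / b ^ (i + 1 : ℕ)) := by
    rw [mul_div_left_comm, wordValue_div_pow hb, Finset.mul_sum]
    exact Finset.sum_congr rfl fun i _ ↦ mul_div_left_comm _ _ _
  rw [hexponent, fourierChar_sum]

lemma expSum_wordValue_pow_div_pow (hb : b ≠ 0) (k m : ℕ) :
    expSum (wordValue b D (k + m)) (b ^ k / b ^ (k + m)) =
      Fintype.card ι ^ k * ∏ j ∈ Finset.range m, expSum D (1 / b ^ (j + 1)) := by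
  have hb' : (b : ℝ) ≠ 0 := Nat.cast_ne_zero.2 hb
  rw [expSum_wordValue_div_pow hb, Finset.prod_range_add]
  congr 1
  · refine Finset.prod_eq_pow_card (fun i hi ↦ ?_) |>.trans (by rw [Finset.card_range])
    rw [← expSum_natCast D (b ^ (k - (i + 1))), Nat.cast_pow,
      pow_sub₀ _ hb' (Finset.mem_range.1 hi), div_eq_mul_inv]
  · refine Finset.prod_congr rfl fun j _ ↦ ?_
    rw [add_assoc, pow_add, div_mul_cancel_left₀ (pow_ne_zero k hb'), one_div]

lemma exists_pos_forall_le_norm_expSum_wordValue (hb : 1 < b)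
    (hD : ∀ j : ℕ, expSum D (1 / b ^ (j + 1)) ≠ 0) :
    ∃ c : ℝ, 0 < c ∧ ∀ k m, c * Fintype.card ι ^ (k + m) ≤
      ‖expSum (wordValue b D (k + m)) (b ^ k / b ^ (k + m))‖ := by
  have hnonempty : Nonempty ι := by
    by_contra! hempty
    exact hD 0 (by simp [expSum])
  have hcard_pos : (0 : ℝ) < Fintype.card ι := Nat.cast_pos.2 Fintype.card_pos
  have hcard : (Fintype.card ι : ℂ) ≠ 0 := Nat.cast_ne_zero.2 Fintype.card_ne_zero
  obtain ⟨c, hc, hprod⟩ :=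
    exists_pos_forall_le_norm_prod_range (fun j ↦ div_ne_zero (hD j) hcard)
      (summable_norm_expSum_div_card_sub_one D hb)
  refine ⟨c, hc, fun k m ↦ ?_⟩
  have hcm := hprod m
  rw [Finset.prod_div_distrib, Finset.prod_const, Finset.card_range, norm_div, norm_pow,
    Complex.norm_natCast, le_div_iff₀ (pow_pos hcard_pos m)] at hcm
  rw [expSum_wordValue_pow_div_pow (by lia), norm_mul, norm_pow, Complex.norm_natCast, pow_add]
  calc c * (Fintype.card ι ^ k * Fintype.card ι ^ m)
      = Fintype.card ι ^ k * (c * Fintype.card ι ^ m) := by ring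
    _ ≤ _ := by gcongr

lemma mul_sq_le_of_injective_wordValue (hb : 1 < b) (hcard : b ≤ Fintype.card ι) {K : ℕ}
    (hD : ∀ a, D a ≤ K) {n : ℕ} (hinj : Function.Injective (wordValue b D n)) {c : ℝ}
    (hc : 0 ≤ c) (hlower : ∀ k < n,
      c * Fintype.card ι ^ n ≤ ‖expSum (wordValue b D n) (b ^ k / b ^ n)‖) :
    n * c ^ 2 ≤ K + 1 := by
  have : NeZero (b ^ n) := ⟨by positivity⟩
  have hsieve := sum_norm_sq_expSum_le hinj (wordValue_lt hb hD n)
    (S := (Finset.range n).image (b ^ ·)) (by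
      simpa using fun k hk ↦ Nat.pow_lt_pow_right hb hk)
  rw [Finset.sum_image (Nat.pow_right_injective hb).injOn] at hsieve
  push_cast [Fintype.card_fun, Fintype.card_fin] at hsieve
  have hpos : (0 : ℝ) < Fintype.card ι ^ n := by
    have : 0 < Fintype.card ι := by lia
    positivity
  refine le_of_mul_le_mul_right ?_ (mul_pos hpos hpos)
  calc n * c ^ 2 * (Fintype.card ι ^ n * Fintype.card ι ^ n)
      = ∑ _k ∈ Finset.range n, (c * (Fintype.card ι : ℝ) ^ n) ^ 2 := by
        rw [Finset.sum_const, Finset.card_range, nsmul_eq_mul]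
        ring
    _ ≤ ∑ k ∈ Finset.range n, ‖expSum (wordValue b D n) (b ^ k / b ^ n)‖ ^ 2 := by
        gcongr with k hk
        exact hlower k (Finset.mem_range.1 hk)
    _ ≤ b ^ n * (Fintype.card ι ^ n * (K + 1)) := hsieve
    _ ≤ Fintype.card ι ^ n * (Fintype.card ι ^ n * (K + 1)) := by gcongr
    _ = (K + 1) * (Fintype.card ι ^ n * Fintype.card ι ^ n) := by ring

theorem exists_not_injective_wordValue (hb : 1 < b) (hcard : b ≤ Fintype.card ι)
    (hD : ∀ j : ℕ, expSum D (1 / b ^ (j + 1)) ≠ 0) :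
    ∃ n, ¬ Function.Injective (wordValue b D n) := by
  by_contra! hinj
  obtain ⟨c, hc, hlower⟩ := exists_pos_forall_le_norm_expSum_wordValue hb hD
  obtain ⟨K, hK⟩ := (Set.finite_range D).bddAbove
  obtain ⟨n, hn⟩ := exists_nat_gt ((K + 1) / c ^ 2)
  rw [div_lt_iff₀ (by positivity)] at hn
  refine hn.not_ge (mul_sq_le_of_injective_wordValue hb hcard (fun a ↦ hK ⟨a, rfl⟩) (hinj n) hc.le
    fun k hk ↦ ?_)
  obtain ⟨m, rfl⟩ := Nat.exists_eq_add_of_le hk.le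
  exact hlower k m

end Overlap

section DigitExpansions

variable {K : ℕ}

lemma norm_digit_div_pow_le (hD : ∀ a, D a ≤ K) (w : ℕ → ι) (i : ℕ) :
    ‖(D (w i) : ℝ) / b ^ (i + 1)‖ ≤ K / b ^ (i + 1) := by
  rw [Real.norm_of_nonneg (by positivity)]
  gcongr
  exact hD _

lemma norm_digitExpansion_le (hb : 1 < b) (hD : ∀ a, D a ≤ K) (w : ℕ → ι) :
    ‖digitExpansion b D w‖ ≤ K / (b - 1) :=
  tsum_of_norm_bounded (hasSum_const_div_pow_succ (by exact_mod_cast hb) K)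
    (norm_digit_div_pow_le hD w)

lemma digitExpansion_eq_wordValue_add (hb : 1 < b) (hD : ∀ a, D a ≤ K) (n : ℕ) (w : ℕ → ι) :
    digitExpansion b D w =
      (wordValue b D n (fun i ↦ w i) + digitExpansion b D (fun i ↦ w (i + n))) / b ^ n := by
  have hsum : Summable fun i ↦ (D (w i) : ℝ) / b ^ (i + 1) :=
    .of_norm_bounded (hasSum_const_div_pow_succ (by exact_mod_cast hb) K).summable
      (norm_digit_div_pow_le hD w)
  rw [add_div, wordValue_div_pow (by lia),
    Fin.sum_univ_eq_sum_range fun i ↦ (D (w i) : ℝ) / b ^ (i + 1), digitExpansion,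
    ← hsum.sum_add_tsum_nat_add n, digitExpansion, ← tsum_div_const]
  congr! 3 with i
  rw [div_div, ← pow_add, Nat.add_right_comm]

theorem dimH_range_digitExpansion_lt_one [Fintype ι] (hb : 1 < b) (hcard : Fintype.card ι ≤ b)
    {n : ℕ} (hn : ¬ Function.Injective (wordValue b D n)) :
    dimH (Set.range (digitExpansion b D)) < 1 := by
  classical
  obtain ⟨K, hK⟩ := (Set.finite_range D).bddAbove
  have hD (a : ι) : D a ≤ K := hK ⟨a, rfl⟩
  have hn0 : n ≠ 0 := by
    rintro rfl
    exact hn (Function.injective_of_subsingleton _)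
  let f (v : Set.range (wordValue b D n)) (x : ℝ) : ℝ := (v + x) / b ^ n
  have hf (v) : LipschitzWith ((b : ℝ≥0) ^ n)⁻¹ (f v) := by
    refine .of_dist_le_mul fun x y ↦ le_of_eq ?_
    simp [f, Real.dist_eq, ← sub_div, abs_div, ← div_eq_inv_mul]
  have hcover : Set.range (digitExpansion b D) ⊆ ⋃ v, f v '' Set.range (digitExpansion b D) := by
    rintro _ ⟨w, rfl⟩
    exact Set.mem_iUnion.2 ⟨⟨_, fun i ↦ w i, rfl⟩, _, ⟨fun i ↦ w (i + n), rfl⟩,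
      (digitExpansion_eq_wordValue_add hb hD n w).symm⟩
  have hbdd : Metric.ediam (Set.range (digitExpansion b D)) ≠ ∞ :=
    (isBounded_iff_forall_norm_le.2
      ⟨_, Set.forall_mem_range.2 (norm_digitExpansion_le hb hD)⟩).ediam_ne_top
  have hcard_range : Fintype.card (Set.range (wordValue b D n)) < b ^ n :=
    calc Fintype.card (Set.range (wordValue b D n)) < Fintype.card (Fin n → ι) :=
          card_range_lt_card_of_not_injective hn
      _ = Fintype.card ι ^ n := by simp
      _ ≤ b ^ n := Nat.pow_le_pow_left hcard n
  have hb' : (1 : ℝ≥0) < b := by exact_mod_cast hb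
  refine dimH_lt_of_subset_iUnion_image hf (inv_lt_one_of_one_lt₀ (one_lt_pow₀ hb' hn0)) hcover
    hbdd one_pos ?_
  rw [NNReal.coe_one, NNReal.rpow_one, ← div_eq_mul_inv, div_lt_one (by positivity)]
  exact_mod_cast hcard_range

end DigitExpansions

end DigitSystems

section CornerCantor

variable {p q : ℕ}

/-- The digits `0, p, q, p + q`: these are `q / 3` times the elements of `Ω_{p/q}`. -/
def cornerDigit (p q : ℕ) (a : Bool × Bool) : ℕ := p * a.1.toNat + q * a.2.toNat

lemma expSum_cornerDigit (x : ℝ) :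
    expSum (cornerDigit p q) x = (1 + (𝐞 (p * x) : ℂ)) * (1 + (𝐞 (q * x) : ℂ)) := by
  simp only [expSum, cornerDigit, Fintype.sum_prod_type, Fintype.sum_bool, Bool.toNat_true,
    Bool.toNat_false, mul_one, mul_zero, add_zero, zero_add, Nat.cast_add, Nat.cast_zero, zero_mul,
    add_mul (p : ℝ), AddChar.map_add_eq_mul, AddChar.map_zero_eq_one, Circle.coe_mul,
    Circle.coe_one]
  ring

lemma exists_two_mul_eq_of_one_add_fourierChar_eq_zero {x : ℝ} (h : 1 + (𝐞 x : ℂ) = 0) :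
    ∃ n : ℤ, 2 * x = 2 * n + 1 := by
  have hcos : Real.cos (2 * Real.pi * x) = -1 := by
    have hre := congrArg Complex.re (eq_neg_of_add_eq_zero_right h)
    rwa [Real.fourierChar_apply, Complex.exp_ofReal_mul_I_re, Complex.neg_re, Complex.one_re]
      at hre
  obtain ⟨n, hn⟩ := Real.cos_eq_neg_one_iff.1 hcos
  exact ⟨n, mul_left_cancel₀ Real.pi_ne_zero (by linarith)⟩

lemma mem_Gamma_of_two_mul_eq {j : ℕ} {n : ℤ} (h : 2 * (p : ℤ) = 4 ^ (j + 1) * (2 * n + 1)) :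
    p ∈ Gamma := by
  have hn : 0 ≤ n := by
    by_contra! hneg
    have : (4 : ℤ) ^ (j + 1) * (2 * n + 1) < 0 := mul_neg_of_pos_of_neg (by positivity) (by lia)
    lia
  lift n to ℕ using hn
  refine ⟨n + 1, j + 1, n.succ_pos, j.succ_pos, ?_⟩
  have hpow : (4 : ℤ) ^ (j + 1) = 2 * 2 ^ (2 * j + 1) := by
    rw [← pow_succ', show 2 * j + 1 + 1 = 2 * (j + 1) by ring, pow_mul]
    norm_num
  rw [hpow] at h
  rw [show 2 * (n + 1) - 1 = 2 * n + 1 by lia, show 2 * (j + 1) - 1 = 2 * j + 1 by lia]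
  zify
  linarith

lemma one_add_fourierChar_ne_zero (hp : p ∉ Gamma) (j : ℕ) :
    1 + (𝐞 (p * (1 / 4 ^ (j + 1))) : ℂ) ≠ 0 := by
  intro h
  obtain ⟨n, hn⟩ := exists_two_mul_eq_of_one_add_fourierChar_eq_zero h
  refine hp (mem_Gamma_of_two_mul_eq (j := j) (n := n) ?_)
  field_simp at hn
  exact_mod_cast hn

lemma exists_eq_mul_cornerDigit (hq : 0 < q) {x : ℝ} (hx : x ∈ Omega (p / q)) :
    ∃ a, x = 3 / q * cornerDigit p q a := by
  have hq' : (q : ℝ) ≠ 0 := by positivity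
  rcases hx with rfl | rfl | rfl | rfl
  · exact ⟨(false, false), by simp [cornerDigit]⟩
  · exact ⟨(true, false), by simp [cornerDigit, mul_comm_div]⟩
  · exact ⟨(false, true), by simp [cornerDigit, hq']⟩
  · exact ⟨(true, true), by simp [cornerDigit, mul_comm_div, mul_add, hq']⟩

lemma cornerC_subset_image_range_digitExpansion (hq : 0 < q) :
    cornerC (p / q) ⊆
      (fun x ↦ (3 / q : ℝ) • x) '' Set.range (digitExpansion 4 (cornerDigit p q)) := by
  rintro _ ⟨d, hd, rfl⟩
  choose w hw using fun i ↦ exists_eq_mul_cornerDigit hq (hd i)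
  refine ⟨_, ⟨w, rfl⟩, ?_⟩
  simp only [digitExpansion, smul_eq_mul, ← tsum_mul_left, hw, mul_div_assoc, Nat.cast_ofNat]

theorem dimH_lt_one_of_overlap_general (p q : ℕ) (hq : 0 < q) (hpG : p ∉ Gamma)
    (hqG : q ∉ Gamma) : dimH (cornerC ((p : ℝ) / q)) < 1 := by
  have expSum_ne_zero (j : ℕ) : expSum (cornerDigit p q) (1 / (4 : ℕ) ^ (j + 1)) ≠ 0 := by
    rw [expSum_cornerDigit]
    exact mul_ne_zero (one_add_fourierChar_ne_zero hpG j) (one_add_fourierChar_ne_zero hqG j)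
  obtain ⟨n, hn⟩ :=
    exists_not_injective_wordValue (by norm_num) (by simp) expSum_ne_zero
  calc dimH (cornerC (p / q))
      ≤ dimH ((fun x ↦ (3 / q : ℝ) • x) '' Set.range (digitExpansion 4 (cornerDigit p q))) :=
        dimH_mono (cornerC_subset_image_range_digitExpansion hq)
    _ ≤ dimH (Set.range (digitExpansion 4 (cornerDigit p q))) :=
        (lipschitzWith_smul _).dimH_image_le _
    _ < 1 := dimH_range_digitExpansion_lt_one (by norm_num) (by simp) hn

end CornerCantor

theorem dimH_lt_one_of_overlap (p q : ℕ) (hp : 0 < p) (hpq : p < q)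
    (hco : Nat.Coprime p q) (hpG : p ∉ Gamma) (hqG : q ∉ Gamma) :
    dimH (cornerC ((p : ℝ) / q)) < 1 :=
  dimH_lt_one_of_overlap_general p q (hp.trans hpq) hpG hqG
end
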